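/- arXiv:2108.05416 — 2 statements merged into one kernel-verified Lean document; each statement's English description precedes it below -/
import Mathlib

section
/- Let n ≥ 1 and s ∈ (0,1). Let u : ℝⁿ → ℝ be a Schwartz function and let w be its normalized Caffarelli–Silvestre extension w(x,y) = (1/d_{n,s}) ∫_{ℝⁿ} y^{2s} u(ξ)(|x-ξ|²+y²)^{-(n+2s)/2} dξ, where d_{n,s} = ∫_{ℝⁿ}(|z|²+1)^{-(n+2s)/2} dz. Then for every function v : ℝⁿ × [0,∞) → ℝ that is continuously differentiable on ℝⁿ × (0,∞), continuous up to y = 0 with v(x,0) = u(x) for all x, and has finite energy ℰ_s(v) := ∫₀^∞ ∫_{ℝⁿ} y^{1-2s} |∇v(x,y)|² dx dy < ∞, one has ℰ_s(w) ≤ ℰ_s(v). -/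
open MeasureTheory Real Filter
open scoped ENNReal Topology

section Kernel

variable {E : Type*} [NormedAddCommGroup E]

theorem norm_sq_add_sq_pos (z : E) {y : ℝ} (hy : 0 < y) : 0 < ‖z‖ ^ 2 + y ^ 2 := by positivity

theorem continuous_bracket (r : ℝ) {y : ℝ} (hy : 0 < y) :
    Continuous fun z : E => (‖z‖ ^ 2 + y ^ 2) ^ (-r) :=
  Continuous.rpow_const (by fun_prop) fun z => Or.inl (norm_sq_add_sq_pos z hy).ne'

theorem bracket_le (z : E) {r y : ℝ} (hr : 0 ≤ r) (hy : 0 < y) :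
    (‖z‖ ^ 2 + y ^ 2) ^ (-r) ≤ (y ^ 2) ^ (-r) :=
  Real.rpow_le_rpow_of_nonpos (by positivity) (by nlinarith [sq_nonneg ‖z‖]) (by linarith)

theorem bracket_sub_one (z : E) (r : ℝ) {y : ℝ} (hy : 0 < y) :
    (‖z‖ ^ 2 + y ^ 2) ^ (-r) = (‖z‖ ^ 2 + y ^ 2) * (‖z‖ ^ 2 + y ^ 2) ^ (-(r + 1)) := by
  have h := norm_sq_add_sq_pos z hy
  rw [show -(r + 1) = -r - 1 by ring, Real.rpow_sub_one h.ne']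
  field_simp

theorem hasDerivAt_bracket (z : E) (r : ℝ) {y : ℝ} (hy : 0 < y) :
    HasDerivAt (fun t : ℝ => (‖z‖ ^ 2 + t ^ 2) ^ (-r))
      (-2 * r * y * (‖z‖ ^ 2 + y ^ 2) ^ (-(r + 1))) y := by
  have h1 : HasDerivAt (fun t : ℝ => ‖z‖ ^ 2 + t ^ 2) (2 * y) y := by
    simpa using (hasDerivAt_pow 2 y).const_add (‖z‖ ^ 2)
  convert h1.rpow_const (p := -r) (Or.inl (norm_sq_add_sq_pos z hy).ne') using 1
  rw [show -(r + 1) = -r - 1 by ring]; ring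

variable [InnerProductSpace ℝ E]

theorem hasLineDerivAt_bracket (z e : E) (r : ℝ) {y : ℝ} (hy : 0 < y) :
    HasLineDerivAt ℝ (fun z : E => (‖z‖ ^ 2 + y ^ 2) ^ (-r))
      (-2 * r * inner ℝ z e * (‖z‖ ^ 2 + y ^ 2) ^ (-(r + 1))) z e := by
  have h1 : HasFDerivAt (fun z : E => ‖z‖ ^ 2 + y ^ 2) (2 • (innerSL ℝ z)) z :=
    (hasStrictFDerivAt_norm_sq z).hasFDerivAt.add_const _
  convert (h1.rpow_const (p := -r) (Or.inl (norm_sq_add_sq_pos z hy).ne')).hasLineDerivAt e using 1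
  simp [show -(r + 1) = -r - 1 by ring]; ring

theorem hasLineDerivAt_inner_mul_bracket (z e : E) (r : ℝ) {y : ℝ} (hy : 0 < y) :
    HasLineDerivAt ℝ (fun z : E => inner ℝ z e * (‖z‖ ^ 2 + y ^ 2) ^ (-r))
      (‖e‖ ^ 2 * (‖z‖ ^ 2 + y ^ 2) ^ (-r)
        - 2 * r * inner ℝ z e ^ 2 * (‖z‖ ^ 2 + y ^ 2) ^ (-(r + 1))) z e := by
  have h0 : HasLineDerivAt ℝ (fun z : E => inner ℝ z e) (‖e‖ ^ 2) z e := by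
    have : HasFDerivAt (fun z : E => inner ℝ z e) (innerSL ℝ e) z := by
      simpa [real_inner_comm] using (innerSL ℝ e).hasFDerivAt (x := z)
    simpa using this.hasLineDerivAt e
  have := HasDerivAt.mul h0 (hasLineDerivAt_bracket z e r hy)
  refine HasDerivAt.congr_deriv this ?_
  simp only [zero_smul, add_zero]
  ring

variable [MeasurableSpace E] [BorelSpace E]

/-- The convolution of `f` with the kernel `z ↦ (‖z‖² + y²)^(-r)`. -/
noncomputable def bracketConv [FiniteDimensional ℝ E] (r : ℝ) (f : E → ℝ) (x : E) (y : ℝ) : ℝ :=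
  ∫ ξ, (‖x - ξ‖ ^ 2 + y ^ 2) ^ (-r) * f ξ

variable [FiniteDimensional ℝ E]

theorem integrable_bracket_mul {f : E → ℝ} (hf : Integrable f) {r y : ℝ} (hr : 0 ≤ r)
    (hy : 0 < y) (x : E) : Integrable fun ξ => (‖x - ξ‖ ^ 2 + y ^ 2) ^ (-r) * f ξ := by
  refine hf.bdd_mul (c := (y ^ 2) ^ (-r))
    ((continuous_bracket r hy).comp (by fun_prop : Continuous fun ξ => x - ξ)).aestronglyMeasurable
    (.of_forall fun ξ => ?_)
  rw [Real.norm_of_nonneg (by positivity)]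
  exact bracket_le _ hr hy

theorem hasDerivAt_bracketConv {f : E → ℝ} (hf : Integrable f) {r y : ℝ} (hr : 0 ≤ r)
    (hy : 0 < y) (x : E) :
    HasDerivAt (bracketConv r f x) (-2 * r * y * bracketConv (r + 1) f x y) y := by
  have hpos : ∀ t ∈ Set.Ioo (y / 2) (2 * y), 0 < t := fun t ht => by linarith [ht.1]
  have key := hasDerivAt_integral_of_dominated_loc_of_deriv_le (μ := (volume : Measure E))
    (F := fun t ξ => (‖x - ξ‖ ^ 2 + t ^ 2) ^ (-r) * f ξ)
    (F' := fun t ξ => -2 * r * t * (‖x - ξ‖ ^ 2 + t ^ 2) ^ (-(r + 1)) * f ξ)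
    (bound := fun ξ => 2 * r * (2 * y) * ((y / 2) ^ 2) ^ (-(r + 1)) * ‖f ξ‖)
    (s := Set.Ioo (y / 2) (2 * y)) (x₀ := y)
    (Ioo_mem_nhds (by linarith) (by linarith)) ?_ (integrable_bracket_mul hf hr hy x) ?_ ?_ ?_ ?_
  · refine key.2.congr_deriv ?_
    rw [bracketConv, ← integral_const_mul]
    exact integral_congr_ae (.of_forall fun ξ => by ring)
  · filter_upwards [Ioi_mem_nhds hy] with t ht
    exact (integrable_bracket_mul hf hr ht x).1
  · have := ((integrable_bracket_mul hf (by linarith : 0 ≤ r + 1) hy x).const_mul (-2 * r * y)).1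
    exact this.congr (.of_forall fun ξ => by ring)
  · refine .of_forall fun ξ t ht => ?_
    have htp := hpos t ht
    rw [norm_mul]
    gcongr
    rw [norm_mul, Real.norm_of_nonneg (by positivity : 0 ≤ (‖x - ξ‖ ^ 2 + t ^ 2) ^ (-(r + 1))),
      show -2 * r * t = -(2 * r * t) by ring, norm_neg, Real.norm_of_nonneg (by positivity)]
    have h1 : (‖x - ξ‖ ^ 2 + t ^ 2) ^ (-(r + 1)) ≤ ((y / 2) ^ 2) ^ (-(r + 1)) :=
      (bracket_le _ (by linarith) htp).trans
        (Real.rpow_le_rpow_of_nonpos (by positivity) (by nlinarith [ht.1]) (by linarith))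
    have := ht.2
    gcongr
  · exact hf.norm.const_mul _
  · exact .of_forall fun ξ t ht => (hasDerivAt_bracket (x - ξ) r (hpos t ht)).mul_const (f ξ)

theorem bracketConv_eq (r : ℝ) (f : E → ℝ) (x : E) (y : ℝ) :
    bracketConv r f x y = ∫ z, (‖z‖ ^ 2 + y ^ 2) ^ (-r) * f (x - z) := by
  rw [← integral_sub_left_eq_self _ volume x]
  simp [bracketConv]

theorem measurable_bracketConv (r : ℝ) {f : E → ℝ} (hf : Measurable f) :
    Measurable fun p : ℝ × E => bracketConv r f p.2 p.1 := by
  refine StronglyMeasurable.measurable ?_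
  refine StronglyMeasurable.integral_prod_right
    (f := fun (p : ℝ × E) ξ => (‖p.2 - ξ‖ ^ 2 + p.1 ^ 2) ^ (-r) * f ξ) ?_
  refine Measurable.stronglyMeasurable ?_
  fun_prop

end Kernel

section Schwartz

open scoped SchwartzMap LineDeriv

variable {E : Type*} [NormedAddCommGroup E] [InnerProductSpace ℝ E]

theorem abs_inner_mul_bracket_le (z e : E) {r y : ℝ} (hr : 0 ≤ r) (hy : 0 < y) :
    |inner ℝ z e * (‖z‖ ^ 2 + y ^ 2) ^ (-(r + 1))| ≤ ‖e‖ / y * (y ^ 2) ^ (-r) := by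
  have hρ := norm_sq_add_sq_pos z hy
  rw [abs_mul, abs_of_nonneg (by positivity : 0 ≤ (‖z‖ ^ 2 + y ^ 2) ^ (-(r + 1)))]
  have h1 : |inner ℝ z e| ≤ ‖e‖ / y * (‖z‖ ^ 2 + y ^ 2) := by
    refine (abs_real_inner_le_norm z e).trans ?_
    rw [div_mul_eq_mul_div, le_div_iff₀ hy]
    nlinarith [norm_nonneg e, norm_nonneg z, sq_nonneg (‖z‖ - y), mul_nonneg (norm_nonneg z) hy.le]
  calc |inner ℝ z e| * (‖z‖ ^ 2 + y ^ 2) ^ (-(r + 1))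
      ≤ (‖e‖ / y * (‖z‖ ^ 2 + y ^ 2)) * (‖z‖ ^ 2 + y ^ 2) ^ (-(r + 1)) := by gcongr
    _ = ‖e‖ / y * (‖z‖ ^ 2 + y ^ 2) ^ (-r) := by rw [bracket_sub_one z r hy]; ring
    _ ≤ _ := by gcongr ?_ * ?_; exact bracket_le z hr hy

theorem inner_sq_mul_bracket_le (z e : E) {r y : ℝ} (hr : 0 ≤ r) (hy : 0 < y) :
    inner ℝ z e ^ 2 * (‖z‖ ^ 2 + y ^ 2) ^ (-(r + 1)) ≤ ‖e‖ ^ 2 * (y ^ 2) ^ (-r) := by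
  have hρ := norm_sq_add_sq_pos z hy
  have h1 : inner ℝ z e ^ 2 ≤ ‖e‖ ^ 2 * (‖z‖ ^ 2 + y ^ 2) := by
    have := sq_le_sq' (neg_le_of_abs_le (abs_real_inner_le_norm z e))
      (le_of_abs_le (abs_real_inner_le_norm z e))
    nlinarith [mul_nonneg (sq_nonneg ‖e‖) (sq_nonneg y)]
  calc inner ℝ z e ^ 2 * (‖z‖ ^ 2 + y ^ 2) ^ (-(r + 1))
      ≤ (‖e‖ ^ 2 * (‖z‖ ^ 2 + y ^ 2)) * (‖z‖ ^ 2 + y ^ 2) ^ (-(r + 1)) := by gcongr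
    _ = ‖e‖ ^ 2 * (‖z‖ ^ 2 + y ^ 2) ^ (-r) := by rw [bracket_sub_one z r hy]; ring
    _ ≤ _ := by gcongr ?_ * ?_; exact bracket_le z hr hy

variable [MeasurableSpace E] [BorelSpace E] [FiniteDimensional ℝ E]

theorem integral_comp_sub_mul_lineDeriv {K K' : E → ℝ} {e : E} {C C' : ℝ} (hK : Continuous K)
    (hK' : Continuous K') (hC : ∀ z, |K z| ≤ C) (hC' : ∀ z, |K' z| ≤ C')
    (h : ∀ z, HasLineDerivAt ℝ K (K' z) z e) (f : 𝓢(E, ℝ)) (x : E) :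
    ∫ ξ, K (x - ξ) * ∂_{e} f ξ = ∫ ξ, K' (x - ξ) * f ξ := by
  have hbdd : ∀ {k : E → ℝ} {c : ℝ} (_ : Continuous k) (_ : ∀ z, |k z| ≤ c) (g : 𝓢(E, ℝ)),
      Integrable fun ξ => k (x - ξ) * g ξ := fun hk hc g =>
    g.integrable.bdd_mul (hk.comp (by fun_prop : Continuous fun ξ => x - ξ)).aestronglyMeasurable
      (.of_forall fun ξ => hc _)
  have key := integral_bilinear_hasLineDerivAt_right_eq_neg_left_of_integrable
    (μ := (volume : Measure E)) (B := ContinuousLinearMap.mul ℝ ℝ) (v := e)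
    (f := fun ξ => K (x - ξ)) (f' := fun ξ => -K' (x - ξ)) (g := f) (g' := fun ξ => ∂_{e} f ξ)
    ?_ ?_ ?_ ?_ ?_
  · simpa [integral_neg] using key
  · simpa using (hbdd hK' hC' f).neg
  · simpa using hbdd hK hC (∂_{e} f)
  · simpa using hbdd hK hC f
  · intro ξ _
    have h1 := h (x - ξ)
    simp only [HasLineDerivAt] at h1 ⊢
    have h2 : HasDerivAt (fun t : ℝ => -t) (-1) 0 := hasDerivAt_neg 0
    have h3 := HasDerivAt.scomp (h := fun t : ℝ => -t) (0 : ℝ) (by simpa using h1) h2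
    refine (h3.congr_deriv (by simp)).congr_of_eventuallyEq (.of_forall fun t => ?_)
    simp only [Function.comp_apply]
    congr 1
    module
  · intro ξ _
    rw [SchwartzMap.lineDerivOp_apply_eq_fderiv]
    exact (f.hasFDerivAt ξ).hasLineDerivAt e

theorem bracketConv_lineDeriv_lineDeriv (f : 𝓢(E, ℝ)) (e : E) {r y : ℝ} (hr : 0 ≤ r)
    (hy : 0 < y) (x : E) :
    bracketConv r (∂_{e} (∂_{e} f) : 𝓢(E, ℝ)) x y =
      ∫ ξ, (-2 * r * ‖e‖ ^ 2 * (‖x - ξ‖ ^ 2 + y ^ 2) ^ (-(r + 1)) + 4 * r * (r + 1) *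
        (inner ℝ (x - ξ) e ^ 2 * (‖x - ξ‖ ^ 2 + y ^ 2) ^ (-(r + 2)))) * f ξ := by
  have hc : ∀ r : ℝ, Continuous fun z : E => (‖z‖ ^ 2 + y ^ 2) ^ (-r) :=
    fun r => continuous_bracket r hy
  have hK' : Continuous fun z : E => -2 * r * (inner ℝ z e * (‖z‖ ^ 2 + y ^ 2) ^ (-(r + 1))) := by
    have := hc (r + 1); fun_prop
  have hb' : ∀ z : E, |-2 * r * (inner ℝ z e * (‖z‖ ^ 2 + y ^ 2) ^ (-(r + 1)))| ≤
      |-2 * r| * (‖e‖ / y * (y ^ 2) ^ (-r)) := fun z => by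
    rw [abs_mul (-2 * r)]
    gcongr
    exact abs_inner_mul_bracket_le z e hr hy
  rw [bracketConv, integral_comp_sub_mul_lineDeriv
    (K' := fun z => -2 * r * (inner ℝ z e * (‖z‖ ^ 2 + y ^ 2) ^ (-(r + 1))))
    (K := fun z => (‖z‖ ^ 2 + y ^ 2) ^ (-r)) (C := (y ^ 2) ^ (-r)) (hc r) hK' ?_ hb' ?_,
    integral_comp_sub_mul_lineDeriv (K' := fun z => -2 * r * ‖e‖ ^ 2 *
      (‖z‖ ^ 2 + y ^ 2) ^ (-(r + 1)) + 4 * r * (r + 1) *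
        (inner ℝ z e ^ 2 * (‖z‖ ^ 2 + y ^ 2) ^ (-(r + 2))))
    (C' := |-2 * r * ‖e‖ ^ 2| * (y ^ 2) ^ (-(r + 1)) +
      |4 * r * (r + 1)| * (‖e‖ ^ 2 * (y ^ 2) ^ (-(r + 1)))) hK' ?_ hb' ?_ ?_]
  · have := hc (r + 1)
    have := hc (r + 2)
    fun_prop
  · intro z
    refine (abs_add_le _ _).trans ?_
    rw [abs_mul (-2 * r * ‖e‖ ^ 2), abs_mul (4 * r * (r + 1)),
      abs_of_nonneg (by positivity : 0 ≤ (‖z‖ ^ 2 + y ^ 2) ^ (-(r + 1))),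
      abs_of_nonneg (by positivity : 0 ≤ inner ℝ z e ^ 2 * (‖z‖ ^ 2 + y ^ 2) ^ (-(r + 2)))]
    gcongr ?_ * ?_ + ?_ * ?_
    · exact bracket_le z (by linarith) hy
    · have := inner_sq_mul_bracket_le z e (by linarith : 0 ≤ r + 1) hy
      rwa [show r + 1 + 1 = r + 2 by ring] at this
  · intro z
    have h := HasDerivAt.const_mul (-2 * r) (hasLineDerivAt_inner_mul_bracket z e (r + 1) hy)
    refine HasDerivAt.congr_deriv h ?_
    rw [show r + 1 + 1 = r + 2 by ring]
    ring
  · intro z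
    rw [abs_of_nonneg (by positivity)]
    exact bracket_le z hr hy
  · intro z
    refine HasDerivAt.congr_deriv (hasLineDerivAt_bracket z e r hy) (by ring)

theorem bracketConv_sum {ι : Type*} [Fintype ι] (f : ι → 𝓢(E, ℝ)) {r y : ℝ} (hr : 0 ≤ r)
    (hy : 0 < y) (x : E) :
    bracketConv r (∑ i, f i : 𝓢(E, ℝ)) x y = ∑ i, bracketConv r (f i) x y := by
  simp only [bracketConv]
  rw [← integral_finsetSum _ fun i _ => integrable_bracket_mul (f i).integrable hr hy x]
  simp [Finset.mul_sum]

theorem bracketConv_laplacian {ι : Type*} [Fintype ι] (b : OrthonormalBasis ι ℝ E)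
    (f : 𝓢(E, ℝ)) {r y : ℝ} (hr : 0 ≤ r) (hy : 0 < y) (x : E) :
    ∑ i, bracketConv r (∂_{b i} (∂_{b i} f) : 𝓢(E, ℝ)) x y =
      (4 * r * (r + 1) - 2 * r * Module.finrank ℝ E) * bracketConv (r + 1) f x y
        - 4 * r * (r + 1) * y ^ 2 * bracketConv (r + 2) f x y := by
  have h1 := integrable_bracket_mul f.integrable (by linarith : 0 ≤ r + 1) hy x
  have h2 := integrable_bracket_mul f.integrable (by linarith : 0 ≤ r + 2) hy x
  simp_rw [bracketConv_lineDeriv_lineDeriv f _ hr hy x]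
  rw [bracketConv, bracketConv, ← integral_const_mul, ← integral_const_mul,
    ← integral_sub (h1.const_mul _) (h2.const_mul _), ← integral_finsetSum]
  · refine integral_congr_ae (.of_forall fun ξ => ?_)
    simp only [← Finset.sum_mul, Finset.sum_add_distrib, ← Finset.mul_sum, b.norm_eq_one]
    rw [b.sum_sq_inner_left]
    simp only [Finset.sum_const, Finset.card_univ, ← Module.finrank_eq_card_basis b.toBasis]
    have := bracket_sub_one (x - ξ) (r + 1) hy
    rw [show r + 1 + 1 = r + 2 by ring] at this
    rw [this]
    simp
    ring
  · intro i _
    have hb : Integrable fun ξ => (inner ℝ (x - ξ) (b i) ^ 2 *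
        (‖x - ξ‖ ^ 2 + y ^ 2) ^ (-(r + 2))) * f ξ := by
      refine f.integrable.bdd_mul (c := ‖b i‖ ^ 2 * (y ^ 2) ^ (-(r + 1))) ?_
        (.of_forall fun ξ => ?_)
      · have := (continuous_bracket (E := E) (r + 2) hy).comp (by fun_prop : Continuous (x - ·))
        simp only [Function.comp_def] at this
        exact Continuous.aestronglyMeasurable (by fun_prop)
      · rw [Real.norm_of_nonneg (by positivity)]
        have := inner_sq_mul_bracket_le (x - ξ) (b i) (by linarith : 0 ≤ r + 1) hy
        rwa [show r + 1 + 1 = r + 2 by ring] at this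
    refine ((h1.const_mul (-2 * r * ‖b i‖ ^ 2)).add (hb.const_mul (4 * r * (r + 1)))).congr
      (.of_forall fun ξ => ?_)
    simp only [Pi.add_apply]
    ring

theorem integrable_bracket {r y : ℝ} (hr : (Module.finrank ℝ E : ℝ) < 2 * r) (hy : 0 < y) :
    Integrable fun z : E => (‖z‖ ^ 2 + y ^ 2) ^ (-r) := by
  have h := (integrable_rpow_neg_one_add_norm_sq (μ := (volume : Measure E)) hr).comp_smul
    (inv_ne_zero hy.ne')
  refine (h.const_mul ((y ^ 2) ^ (-r))).congr (.of_forall fun z => ?_)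
  simp only
  rw [show -(2 * r) / 2 = -r by ring, ← Real.mul_rpow (by positivity) (by positivity),
    norm_smul, mul_pow, Real.norm_of_nonneg (by positivity)]
  congr 1
  field_simp
  ring

theorem integral_bracket_comp {r y : ℝ} (hy : 0 < y) (g : E → ℝ) :
    y ^ (2 * r - Module.finrank ℝ E) * ∫ z : E, (‖z‖ ^ 2 + y ^ 2) ^ (-r) * g z =
      ∫ z : E, (‖z‖ ^ 2 + 1) ^ (-r) * g (y • z) := by
  have h := Measure.integral_comp_smul (volume : Measure E)
    (fun z : E => (‖z‖ ^ 2 + y ^ 2) ^ (-r) * g z) y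
  have h2 : ∀ z : E, (‖y • z‖ ^ 2 + y ^ 2) ^ (-r) = y ^ (-(2 * r)) * (‖z‖ ^ 2 + 1) ^ (-r) := by
    intro z
    rw [norm_smul, Real.norm_of_nonneg hy.le,
      show (y * ‖z‖) ^ 2 + y ^ 2 = y ^ (2 : ℝ) * (‖z‖ ^ 2 + 1) by norm_cast; ring,
      Real.mul_rpow (by positivity) (by positivity), ← Real.rpow_mul hy.le]
    ring_nf
  simp_rw [h2, mul_assoc, integral_const_mul] at h
  rw [abs_of_pos (by positivity), smul_eq_mul] at h
  have h3 : ∫ z : E, (‖z‖ ^ 2 + 1) ^ (-r) * g (y • z) = y ^ (2 * r) * (y ^ (-(2 * r)) *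
      ∫ z : E, (‖z‖ ^ 2 + 1) ^ (-r) * g (y • z)) := by
    rw [← mul_assoc, ← Real.rpow_add hy]; simp
  rw [h3, h, Real.rpow_sub hy, Real.rpow_natCast]
  ring

theorem integral_bracket {r y : ℝ} (hy : 0 < y) :
    y ^ (2 * r - Module.finrank ℝ E) * ∫ z : E, (‖z‖ ^ 2 + y ^ 2) ^ (-r) =
      ∫ z : E, (‖z‖ ^ 2 + 1) ^ (-r) := by
  simpa using integral_bracket_comp (r := r) hy (fun _ : E => (1 : ℝ))

theorem hasFDerivAt_bracketConv (f : 𝓢(E, ℝ)) {r y : ℝ}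
    (hr : (Module.finrank ℝ E : ℝ) < 2 * r) (hy : 0 < y) (x : E) :
    ∃ L : E →L[ℝ] ℝ, HasFDerivAt (fun x => bracketConv r f x y) L x ∧
      ∀ e, L e = bracketConv r (∂_{e} f : 𝓢(E, ℝ)) x y := by
  have hk := integrable_bracket (E := E) hr hy
  have hf : Continuous fun z => fderiv ℝ f z := (f.smooth 1).continuous_fderiv one_ne_zero
  obtain ⟨C, hC⟩ : ∃ C, ∀ z, ‖fderiv ℝ f z‖ ≤ C := by
    obtain ⟨C, hC⟩ := (SchwartzMap.fderivCLM ℝ E ℝ f).decay 0 0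
    exact ⟨C, fun z => by simpa using hC.2 z⟩
  obtain ⟨C₀, hC₀⟩ : ∃ C, ∀ z, ‖f z‖ ≤ C := by
    obtain ⟨C, hC⟩ := f.decay 0 0
    exact ⟨C, fun z => by simpa using hC.2 z⟩
  have hint : Integrable fun z => (‖z‖ ^ 2 + y ^ 2) ^ (-r) • fderiv ℝ f (x - z) := by
    refine hk.smul_bdd C (Continuous.aestronglyMeasurable (by fun_prop))
      (.of_forall fun z => hC _)
  have key := hasFDerivAt_integral_of_dominated_of_fderiv_le (𝕜 := ℝ) (μ := (volume : Measure E))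
    (F := fun x z => (‖z‖ ^ 2 + y ^ 2) ^ (-r) * f (x - z))
    (F' := fun x z => (‖z‖ ^ 2 + y ^ 2) ^ (-r) • fderiv ℝ f (x - z))
    (bound := fun z => (‖z‖ ^ 2 + y ^ 2) ^ (-r) * C) (s := Set.univ) (x₀ := x)
    univ_mem ?_ ?_ hint.1 ?_ (hk.mul_const C) ?_
  · refine ⟨_, by simpa only [bracketConv_eq] using key, fun e => ?_⟩
    rw [ContinuousLinearMap.integral_apply hint, bracketConv_eq]
    simp [SchwartzMap.lineDerivOp_apply_eq_fderiv]
  · exact .of_forall fun x => ((continuous_bracket r hy).mul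
      (f.continuous.comp (by fun_prop))).aestronglyMeasurable
  · exact hk.mul_bdd (c := C₀) (f.continuous.comp (by fun_prop : Continuous fun z => x - z)).aestronglyMeasurable
      (.of_forall fun z => hC₀ _)
  · refine .of_forall fun z x' _ => ?_
    rw [norm_smul, Real.norm_of_nonneg (by positivity)]
    gcongr
    exact hC _
  · refine .of_forall fun z x' _ => ?_
    exact ((hasFDerivAt_comp_sub z).2 (f.hasFDerivAt (x' - z))).const_mul _

theorem tendsto_bracketConv (f : 𝓢(E, ℝ)) {r : ℝ} (hr : (Module.finrank ℝ E : ℝ) < 2 * r) (x : E) :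
    Tendsto (fun y => y ^ (2 * r - Module.finrank ℝ E) * bracketConv r f x y) (𝓝[>] 0)
      (𝓝 ((∫ z : E, (‖z‖ ^ 2 + 1) ^ (-r)) * f x)) := by
  have hk : Integrable fun z : E => (‖z‖ ^ 2 + 1) ^ (-r) := by
    simpa using integrable_bracket (E := E) hr one_pos
  obtain ⟨C₀, hC₀⟩ : ∃ C, ∀ z, ‖f z‖ ≤ C := by
    obtain ⟨C, hC⟩ := f.decay 0 0
    exact ⟨C, fun z => by simpa using hC.2 z⟩
  have key : Tendsto (fun y : ℝ => ∫ z : E, (‖z‖ ^ 2 + 1) ^ (-r) * f (x - y • z)) (𝓝[>] 0)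
      (𝓝 (∫ z : E, (‖z‖ ^ 2 + 1) ^ (-r) * f x)) := by
    refine tendsto_integral_filter_of_dominated_convergence
      (fun z => (‖z‖ ^ 2 + 1) ^ (-r) * C₀) ?_ ?_ (hk.mul_const _) ?_
    · exact .of_forall fun y => hk.1.mul
        (f.continuous.comp (by fun_prop)).aestronglyMeasurable
    · refine .of_forall fun y => .of_forall fun z => ?_
      rw [norm_mul, Real.norm_of_nonneg (by positivity)]
      gcongr
      exact hC₀ _
    · refine .of_forall fun z => ?_
      have : Continuous fun y : ℝ => (‖z‖ ^ 2 + 1) ^ (-r) * f (x - y • z) :=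
        continuous_const.mul (f.continuous.comp (by fun_prop))
      simpa using (this.tendsto 0).mono_left nhdsWithin_le_nhds
  rw [integral_mul_const] at key
  refine key.congr' ?_
  filter_upwards [self_mem_nhdsWithin] with y hy
  rw [bracketConv_eq, integral_bracket_comp hy]

end Schwartz

section SquareIntegrals

theorem lintegral_mul_sq_le {α : Type*} [MeasurableSpace α] (μ : Measure α) {f g : α → ℝ≥0∞}
    (hf : AEMeasurable f μ) (hg : AEMeasurable g μ) :
    (∫⁻ x, f x * g x ∂μ) ^ 2 ≤ (∫⁻ x, f x ^ 2 ∂μ) * ∫⁻ x, g x ^ 2 ∂μ := by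
  have h := ENNReal.lintegral_mul_le_Lp_mul_Lq μ Real.HolderConjugate.two_two hf hg
  simp only [Pi.mul_apply, ENNReal.rpow_two] at h
  calc _ ≤ ((∫⁻ x, f x ^ 2 ∂μ) ^ (1 / 2 : ℝ) * (∫⁻ x, g x ^ 2 ∂μ) ^ (1 / 2 : ℝ)) ^ 2 := by gcongr
    _ = _ := by
      rw [mul_pow, ← ENNReal.rpow_natCast, ← ENNReal.rpow_natCast, ← ENNReal.rpow_mul,
        ← ENNReal.rpow_mul]
      norm_num

theorem lintegral_weight_mul_sq_le {α : Type*} [MeasurableSpace α] (μ : Measure α)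
    {k f : α → ℝ≥0∞} (hk : AEMeasurable k μ) (hf : AEMeasurable f μ) :
    (∫⁻ x, k x * f x ∂μ) ^ 2 ≤ (∫⁻ x, k x ∂μ) * ∫⁻ x, k x * f x ^ 2 ∂μ := by
  have hsq : ∀ x, (k x ^ (1 / 2 : ℝ)) ^ 2 = k x := fun x => by
    rw [← ENNReal.rpow_natCast, ← ENNReal.rpow_mul]; norm_num
  have h := lintegral_mul_sq_le μ (hk.pow_const (1 / 2 : ℝ)) ((hk.pow_const (1 / 2 : ℝ)).mul hf)
  simp only [Pi.mul_apply, mul_pow, hsq, ← mul_assoc, ← sq] at h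
  exact h

theorem lintegral_convolution_sq_le {G : Type*} [AddCommGroup G] [MeasurableSpace G]
    [MeasurableAdd₂ G] [MeasurableNeg G] (μ : Measure G) [SFinite μ] [μ.IsAddLeftInvariant]
    [μ.IsNegInvariant] {k f : G → ℝ≥0∞} (hk : Measurable k) (hf : Measurable f) :
    ∫⁻ x, (∫⁻ ξ, k (x - ξ) * f ξ ∂μ) ^ 2 ∂μ ≤ (∫⁻ z, k z ∂μ) ^ 2 * ∫⁻ x, f x ^ 2 ∂μ := by
  have : μ.IsAddRightInvariant := inferInstance
  have hk₂ : Measurable fun p : G × G => k (p.1 - p.2) := by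
    simp only [sub_eq_add_neg]
    fun_prop
  have hks : ∀ x, Measurable fun ξ => k (x - ξ) := fun x => hk₂.comp measurable_prodMk_left
  calc ∫⁻ x, (∫⁻ ξ, k (x - ξ) * f ξ ∂μ) ^ 2 ∂μ
      ≤ ∫⁻ x, (∫⁻ z, k z ∂μ) * ∫⁻ ξ, k (x - ξ) * f ξ ^ 2 ∂μ ∂μ := by
        refine lintegral_mono fun x => ?_
        refine (lintegral_weight_mul_sq_le μ (hks x).aemeasurable hf.aemeasurable).trans_eq ?_
        rw [lintegral_sub_left_eq_self k x]
    _ = (∫⁻ z, k z ∂μ) * ∫⁻ ξ, ∫⁻ x, k (x - ξ) * f ξ ^ 2 ∂μ ∂μ := by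
        rw [lintegral_const_mul, lintegral_lintegral_swap]
        · exact (hk₂.mul (by fun_prop : Measurable fun p : G × G => f p.2 ^ 2)).aemeasurable
        · exact (hk₂.mul (by fun_prop : Measurable fun p : G × G => f p.2 ^ 2)).lintegral_prod_right'
    _ = _ := by
        rw [sq, mul_assoc]
        congr 1
        rw [← lintegral_const_mul _ (by fun_prop)]
        refine lintegral_congr fun ξ => ?_
        rw [lintegral_mul_const _ (by simp only [sub_eq_add_neg]; fun_prop),
          lintegral_sub_right_eq_self k ξ]

theorem lintegral_rpow_sub_one_le {a b β : ℝ} (ha : 0 ≤ a) (hb : 0 ≤ b) (hβ : 0 < β) :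
    ∫⁻ t in Set.Ioc a b, ENNReal.ofReal (t ^ (β - 1)) ≤ ENNReal.ofReal (b ^ β / β) := by
  calc ∫⁻ t in Set.Ioc a b, ENNReal.ofReal (t ^ (β - 1))
      ≤ ∫⁻ t in Set.Ioc 0 b, ENNReal.ofReal (t ^ (β - 1)) :=
        lintegral_mono_set (Set.Ioc_subset_Ioc_left ha)
    _ = ENNReal.ofReal (b ^ β / β) := by
        have hint : IntervalIntegrable (fun t : ℝ => t ^ (β - 1)) volume 0 b :=
          intervalIntegral.intervalIntegrable_rpow' (by linarith)
        rw [← ofReal_integral_eq_lintegral_ofReal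
          ((intervalIntegrable_iff_integrableOn_Ioc_of_le hb).1 hint),
          ← intervalIntegral.integral_of_le hb, integral_rpow (Or.inl (by linarith))]
        · simp [Real.zero_rpow hβ.ne']
        · filter_upwards [ae_restrict_mem measurableSet_Ioc] with t ht
          have := ht.1
          positivity

theorem enorm_sub_sq_le_lintegral {f h : ℝ → ℝ} {f₀ a b β : ℝ} (ha : 0 ≤ a) (hab : a < b)
    (hβ : 0 < β) (hf : ∀ t ∈ Set.Ioc a b, HasDerivAt f (t ^ (β - 1) * h t) t)
    (hh : ContinuousOn h (Set.Ioc a b)) (hf₀ : Tendsto f (𝓝[>] a) (𝓝 f₀)) :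
    ‖f b - f₀‖ₑ ^ 2 ≤ ENNReal.ofReal (b ^ β / β) *
      ∫⁻ t in Set.Ioc a b, ENNReal.ofReal (t ^ (β - 1)) * ‖h t‖ₑ ^ 2 := by
  have hpos : ∀ t ∈ Set.Ioc a b, 0 < t := fun t ht => ha.trans_lt ht.1
  have hle : ‖f b - f₀‖ₑ ≤ ∫⁻ t in Set.Ioc a b, ENNReal.ofReal (t ^ (β - 1)) * ‖h t‖ₑ := by
    have hlim : Tendsto (fun t => ‖f b - f t‖ₑ) (𝓝[>] a) (𝓝 ‖f b - f₀‖ₑ) :=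
      (continuous_enorm.tendsto _).comp (tendsto_const_nhds.sub hf₀)
    refine le_of_tendsto hlim ?_
    filter_upwards [Ioo_mem_nhdsGT hab] with c hc
    have hsub : Set.Icc c b ⊆ Set.Ioc a b := fun t ht => ⟨hc.1.trans_le ht.1, ht.2⟩
    have hcont : ContinuousOn (fun t => t ^ (β - 1) * h t) (Set.uIcc c b) := by
      rw [Set.uIcc_of_le hc.2.le]
      refine ContinuousOn.mul ?_ (hh.mono hsub)
      exact continuousOn_id.rpow_const fun t ht => Or.inl (hpos t (hsub ht)).ne'
    rw [← intervalIntegral.integral_eq_sub_of_hasDerivAt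
      (fun t ht => hf t (hsub (by rwa [Set.uIcc_of_le hc.2.le] at ht))) hcont.intervalIntegrable,
      intervalIntegral.integral_of_le hc.2.le]
    refine (enorm_integral_le_lintegral_enorm _).trans ?_
    refine (lintegral_mono_set (Set.Ioc_subset_Ioc_left hc.1.le)).trans_eq ?_
    refine setLIntegral_congr_fun measurableSet_Ioc fun t ht => ?_
    have := hpos t ht
    rw [enorm_mul, Real.enorm_of_nonneg (by positivity)]
  calc _ ≤ (∫⁻ t in Set.Ioc a b, ENNReal.ofReal (t ^ (β - 1)) * ‖h t‖ₑ) ^ 2 := by gcongr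
    _ ≤ _ := lintegral_weight_mul_sq_le _ (by fun_prop)
        (hh.aestronglyMeasurable measurableSet_Ioc).enorm
    _ ≤ _ := by
        gcongr
        exact lintegral_rpow_sub_one_le ha (ha.trans hab.le) hβ

theorem lintegral_enorm_sub_sq_le {X : Type*} [MeasurableSpace X] (μ : Measure X) [SFinite μ]
    {f h : X → ℝ → ℝ} {f₀ : X → ℝ} {a b β : ℝ} (ha : 0 ≤ a) (hab : a < b) (hβ : 0 < β)
    (hf : ∀ x, ∀ t ∈ Set.Ioc a b, HasDerivAt (f x) (t ^ (β - 1) * h x t) t)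
    (hh : ∀ x, ContinuousOn (h x) (Set.Ioc a b))
    (hf₀ : ∀ x, Tendsto (f x) (𝓝[>] a) (𝓝 (f₀ x)))
    (hmeas : AEMeasurable (fun p : ℝ × X => h p.2 p.1) ((volume.restrict (Set.Ioc a b)).prod μ)) :
    ∫⁻ x, ‖f x b - f₀ x‖ₑ ^ 2 ∂μ ≤ ENNReal.ofReal (b ^ β / β) *
      ∫⁻ t in Set.Ioc a b, ∫⁻ x, ENNReal.ofReal (t ^ (β - 1)) * ‖h x t‖ₑ ^ 2 ∂μ := by
  refine (lintegral_mono fun x =>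
    enorm_sub_sq_le_lintegral ha hab hβ (hf x) (hh x) (hf₀ x)).trans_eq ?_
  rw [lintegral_const_mul' _ _ ENNReal.ofReal_ne_top, lintegral_lintegral_swap]
  have h1 : AEMeasurable (fun p : ℝ × X => ENNReal.ofReal (p.1 ^ (β - 1)) * ‖h p.2 p.1‖ₑ ^ 2)
      ((volume.restrict (Set.Ioc a b)).prod μ) :=
    (by fun_prop : Measurable fun p : ℝ × X => ENNReal.ofReal (p.1 ^ (β - 1))).aemeasurable.mul
      (hmeas.enorm.pow_const 2)
  exact h1.prod_swap

theorem enorm_sq_eq_ofReal (a : ℝ) : ‖a‖ₑ ^ 2 = ENNReal.ofReal (a ^ 2) := by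
  rw [← ofReal_norm, ← ENNReal.ofReal_pow (norm_nonneg _), Real.norm_eq_abs, sq_abs]

theorem lintegral_enorm_add_sq_le {α : Type*} [MeasurableSpace α] (μ : Measure α) (f : α → ℝ)
    {g : α → ℝ} (hg : AEMeasurable g μ) :
    ∫⁻ x, ‖f x + g x‖ₑ ^ 2 ∂μ ≤ 2 * (∫⁻ x, ‖f x‖ₑ ^ 2 ∂μ + ∫⁻ x, ‖g x‖ₑ ^ 2 ∂μ) := by
  rw [← lintegral_add_right' _ (hg.enorm.pow_const 2), ← lintegral_const_mul' _ _ (by simp)]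
  refine lintegral_mono fun x => ?_
  simp only [enorm_sq_eq_ofReal]
  rw [← ENNReal.ofReal_add (by positivity) (by positivity), show (2 : ℝ≥0∞) = ENNReal.ofReal 2 by simp,
    ← ENNReal.ofReal_mul (by norm_num)]
  exact ENNReal.ofReal_le_ofReal (by nlinarith [sq_nonneg (f x - g x)])

theorem lintegral_enorm_sub_sq_le_of_forall_le {X : Type*} [MeasurableSpace X] (μ : Measure X)
    [SFinite μ] {f h : X → ℝ → ℝ} {f₀ : X → ℝ} {a b β : ℝ} (ha : 0 ≤ a) (hab : a < b) (hβ : 0 < β)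
    (hf : ∀ x, ∀ t ∈ Set.Ioc a b, HasDerivAt (f x) (t ^ (β - 1) * h x t) t)
    (hh : ∀ x, ContinuousOn (h x) (Set.Ioc a b))
    (hf₀ : ∀ x, Tendsto (f x) (𝓝[>] a) (𝓝 (f₀ x)))
    (hmeas : AEMeasurable (fun p : ℝ × X => h p.2 p.1) ((volume.restrict (Set.Ioc a b)).prod μ))
    {A : ℝ≥0∞} (hA : ∀ t ∈ Set.Ioc a b, ∫⁻ x, ‖h x t‖ₑ ^ 2 ∂μ ≤ A) :
    ∫⁻ x, ‖f x b - f₀ x‖ₑ ^ 2 ∂μ ≤ ENNReal.ofReal (b ^ β / β) * (ENNReal.ofReal (b ^ β / β) * A) := by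
  refine (lintegral_enorm_sub_sq_le μ ha hab hβ hf hh hf₀ hmeas).trans ?_
  gcongr
  calc _ ≤ ∫⁻ t in Set.Ioc a b, ENNReal.ofReal (t ^ (β - 1)) * A := by
        refine setLIntegral_mono' measurableSet_Ioc fun t ht => ?_
        rw [lintegral_const_mul' _ _ ENNReal.ofReal_ne_top]
        gcongr
        exact hA t ht
    _ ≤ _ := by
        rw [lintegral_mul_const _ (by fun_prop)]
        gcongr
        exact lintegral_rpow_sub_one_le ha (ha.trans hab.le) hβ

end SquareIntegrals

section Extension

open scoped SchwartzMap LineDeriv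

variable {E : Type*} [NormedAddCommGroup E] [InnerProductSpace ℝ E]

variable (E) in
/-- Half of the decay exponent of the Caffarelli–Silvestre kernel. -/
noncomputable def csExponent (s : ℝ) : ℝ := ((Module.finrank ℝ E : ℝ) + 2 * s) / 2

theorem finrank_lt_csExponent {s : ℝ} (hs : 0 < s) :
    (Module.finrank ℝ E : ℝ) < 2 * csExponent E s := by
  rw [csExponent]; linarith

theorem csExponent_pos {s : ℝ} (hs : 0 < s) : 0 < csExponent E s := by
  rw [csExponent]; positivity

theorem two_mul_csExponent_sub (s : ℝ) : 2 * csExponent E s - Module.finrank ℝ E = 2 * s := by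
  rw [csExponent]; ring

variable [MeasurableSpace E] [BorelSpace E] [FiniteDimensional ℝ E]

variable (E) in
/-- The normalizing constant of the Caffarelli–Silvestre kernel. -/
noncomputable def csMass (s : ℝ) : ℝ := ∫ z : E, (‖z‖ ^ 2 + 1) ^ (-csExponent E s)

/-- The normalized Caffarelli–Silvestre extension. -/
noncomputable def csExt (s : ℝ) (f : E → ℝ) (x : E) (y : ℝ) : ℝ :=
  (csMass E s)⁻¹ * (y ^ (2 * s) * bracketConv (csExponent E s) f x y)

/-- The weighted normal derivative `y^(1-2s) ∂_y` of the Caffarelli–Silvestre extension. -/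
noncomputable def csFlux (s : ℝ) (f : E → ℝ) (x : E) (y : ℝ) : ℝ :=
  (csMass E s)⁻¹ * (2 * s * bracketConv (csExponent E s) f x y
    - 2 * csExponent E s * y ^ 2 * bracketConv (csExponent E s + 1) f x y)

theorem csMass_pos {s : ℝ} (hs : 0 < s) : 0 < csMass E s := by
  have hk : Integrable fun z : E => (‖z‖ ^ 2 + 1) ^ (-csExponent E s) := by
    simpa using integrable_bracket (E := E) (finrank_lt_csExponent hs) one_pos
  refine (integral_pos_iff_support_of_nonneg (fun z => by positivity) hk).2 ?_
  have : Function.support (fun z : E => (‖z‖ ^ 2 + 1) ^ (-csExponent E s)) = Set.univ :=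
    Set.eq_univ_of_forall fun z => (by positivity : (0 : ℝ) < _).ne'
  rw [this]
  exact Measure.measure_univ_pos.2 (NeZero.ne _)

theorem lintegral_sq_le_of_abs_le_bracketConv {s y A : ℝ} (hs : 0 < s) (hy : 0 < y) (hA : 0 ≤ A)
    {f g : E → ℝ} (hf : Integrable f) (hfm : Measurable f)
    (h : ∀ x, |g x| ≤ A * bracketConv (csExponent E s) (fun ξ => |f ξ|) x y) :
    ∫⁻ x, ‖g x‖ₑ ^ 2 ≤
      ENNReal.ofReal (A * (y ^ (-(2 * s)) * csMass E s)) ^ 2 * ∫⁻ x, ‖f x‖ₑ ^ 2 := by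
  set r := csExponent E s with hr
  have hk := integrable_bracket (E := E) (finrank_lt_csExponent hs) hy
  have hmass : ∫ z : E, (‖z‖ ^ 2 + y ^ 2) ^ (-r) = y ^ (-(2 * s)) * csMass E s := by
    rw [csMass, ← integral_bracket hy, two_mul_csExponent_sub, ← mul_assoc, ← Real.rpow_add hy]
    simp [hr]
  have hkm : Measurable fun z : E => ENNReal.ofReal (A * (‖z‖ ^ 2 + y ^ 2) ^ (-r)) := by fun_prop
  have hmass' : ∫⁻ z : E, ENNReal.ofReal (A * (‖z‖ ^ 2 + y ^ 2) ^ (-r)) =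
      ENNReal.ofReal (A * (y ^ (-(2 * s)) * csMass E s)) := by
    rw [← ofReal_integral_eq_lintegral_ofReal (hk.const_mul A)
      (.of_forall fun z => by positivity), integral_const_mul, hmass]
  rw [← hmass']
  refine le_trans (lintegral_mono fun x => ?_)
    (lintegral_convolution_sq_le volume hkm hfm.enorm)
  gcongr
  rw [← ofReal_norm, Real.norm_eq_abs]
  refine (ENNReal.ofReal_le_ofReal (h x)).trans_eq ?_
  rw [bracketConv, ← integral_const_mul, ofReal_integral_eq_lintegral_ofReal
    ((integrable_bracket_mul hf.abs (csExponent_pos hs).le hy x).const_mul A)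
    (.of_forall fun z => by positivity)]
  refine lintegral_congr fun ξ => ?_
  rw [← mul_assoc, ENNReal.ofReal_mul (by positivity), ← Real.norm_eq_abs, ofReal_norm]

theorem abs_bracketConv_le {f : E → ℝ} (r : ℝ) (x : E) (y : ℝ) :
    |bracketConv r f x y| ≤ bracketConv r (fun ξ => |f ξ|) x y := by
  rw [bracketConv, bracketConv, ← Real.norm_eq_abs]
  refine (norm_integral_le_integral_norm _).trans_eq ?_
  refine integral_congr_ae (.of_forall fun ξ => ?_)
  simp only [norm_mul, Real.norm_eq_abs]
  rw [abs_of_nonneg (by positivity : 0 ≤ (‖x - ξ‖ ^ 2 + y ^ 2) ^ (-r))]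

theorem bracketConv_add_one_abs_le {f : E → ℝ} (hf : Integrable f) {r y : ℝ} (hr : 0 ≤ r)
    (hy : 0 < y) (x : E) :
    y ^ 2 * bracketConv (r + 1) (fun ξ => |f ξ|) x y ≤ bracketConv r (fun ξ => |f ξ|) x y := by
  rw [bracketConv, bracketConv, ← integral_const_mul]
  refine integral_mono ((integrable_bracket_mul hf.abs (by linarith) hy x).const_mul _)
    (integrable_bracket_mul hf.abs hr hy x) fun ξ => ?_
  simp only
  rw [bracket_sub_one _ r hy, ← mul_assoc]
  gcongr
  nlinarith [sq_nonneg ‖x - ξ‖]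

theorem lintegral_csExt_sq_le {s y : ℝ} (hs : 0 < s) (hy : 0 < y) {f : E → ℝ}
    (hf : Integrable f) (hfm : Measurable f) :
    ∫⁻ x, ‖csExt s f x y‖ₑ ^ 2 ≤ ∫⁻ x, ‖f x‖ₑ ^ 2 := by
  have hd := csMass_pos (E := E) hs
  refine (lintegral_sq_le_of_abs_le_bracketConv (A := (csMass E s)⁻¹ * y ^ (2 * s)) hs hy
    (by positivity) hf hfm fun x => ?_).trans_eq ?_
  · rw [csExt, ← mul_assoc, abs_mul, abs_of_nonneg (by positivity)]
    gcongr
    exact abs_bracketConv_le _ x y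
  · have : (csMass E s)⁻¹ * y ^ (2 * s) * (y ^ (-(2 * s)) * csMass E s) = 1 := by
      rw [Real.rpow_neg hy.le]; field_simp
    rw [this]; simp

theorem lintegral_csFlux_sq_le {s y : ℝ} (hs : 0 < s) (hy : 0 < y) {f : E → ℝ}
    (hf : Integrable f) (hfm : Measurable f) :
    ∫⁻ x, ‖csFlux s f x y‖ₑ ^ 2 ≤
      ENNReal.ofReal ((2 * s + 2 * csExponent E s) ^ 2 * y ^ (-(4 * s))) *
        ∫⁻ x, ‖f x‖ₑ ^ 2 := by
  have hd := csMass_pos (E := E) hs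
  have hm := csExponent_pos (E := E) hs
  refine (lintegral_sq_le_of_abs_le_bracketConv
    (A := (csMass E s)⁻¹ * (2 * s + 2 * csExponent E s)) hs hy
    (by positivity) hf hfm fun x => ?_).trans_eq ?_
  · rw [csFlux, abs_mul, abs_of_pos (inv_pos.2 hd), mul_assoc (csMass E s)⁻¹]
    gcongr
    refine (norm_sub_le (E := ℝ) _ _).trans ?_
    simp only [Real.norm_eq_abs]
    rw [abs_mul, abs_mul (2 * csExponent E s * y ^ 2), abs_of_pos (by positivity : 0 < 2 * s),
      abs_of_pos (by positivity : 0 < 2 * csExponent E s * y ^ 2), add_mul, mul_assoc _ (y ^ 2)]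
    gcongr
    · exact abs_bracketConv_le _ x y
    · exact (mul_le_mul_of_nonneg_left (abs_bracketConv_le _ x y) (by positivity)).trans
        (bracketConv_add_one_abs_le hf hm.le hy x)
  · rw [← ENNReal.ofReal_pow (by positivity)]
    congr 2
    have : y ^ (-(4 * s)) = y ^ (-(2 * s)) * y ^ (-(2 * s)) := by
      rw [← Real.rpow_add hy]; ring_nf
    rw [this]
    field_simp

theorem hasDerivAt_csExt {s y : ℝ} (hs : 0 < s) (hy : 0 < y) {f : E → ℝ}
    (hf : Integrable f) (x : E) :
    HasDerivAt (csExt s f x) (y ^ (2 * s - 1) * csFlux s f x y) y := by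
  have h1 := hasDerivAt_bracketConv hf (csExponent_pos (E := E) hs).le hy x
  have h2 := Real.hasDerivAt_rpow_const (x := y) (p := 2 * s) (Or.inl hy.ne')
  refine ((h2.mul h1).const_mul (csMass E s)⁻¹).congr_deriv ?_
  have h3 : y ^ (2 * s) = y ^ (2 * s - 1) * y := by
    rw [← Real.rpow_add_one hy.ne']; ring_nf
  rw [h3, csFlux]
  ring

theorem hasDerivAt_csFlux {ι : Type*} [Fintype ι] (b : OrthonormalBasis ι ℝ E) {s y : ℝ}
    (hs : 0 < s) (hy : 0 < y) (f : 𝓢(E, ℝ)) (x : E) :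
    HasDerivAt (csFlux s f x)
      (y ^ (1 - 2 * s) * -∑ i, csExt s (∂_{b i} (∂_{b i} f) : 𝓢(E, ℝ)) x y) y := by
  have hm := (csExponent_pos (E := E) hs).le
  have h1 := hasDerivAt_bracketConv f.integrable hm hy x
  have h2 := hasDerivAt_bracketConv f.integrable (by linarith : 0 ≤ csExponent E s + 1) hy x
  have h3 := ((hasDerivAt_pow 2 y).const_mul (2 * csExponent E s)).mul h2
  refine (((h1.const_mul (2 * s)).sub h3).const_mul (csMass E s)⁻¹).congr_deriv ?_
  have h4 : y ^ (1 - 2 * s) * y ^ (2 * s) = y := by rw [← Real.rpow_add hy]; simp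
  simp only [csExt, ← Finset.mul_sum]
  rw [bracketConv_laplacian b f hm hy x]
  have h5 : (Module.finrank ℝ E : ℝ) = 2 * csExponent E s - 2 * s := by
    rw [csExponent]; ring
  have h6 : ∀ c B : ℝ, y ^ (1 - 2 * s) * -(c * (y ^ (2 * s) * B)) = -(c * (y * B)) := fun c B => by
    linear_combination (-(c * B)) * h4
  rw [h6, h5, show csExponent E s + 1 + 1 = csExponent E s + 2 by ring]
  push_cast
  ring

theorem csExt_sum {ι : Type*} [Fintype ι] (f : ι → 𝓢(E, ℝ)) {s y : ℝ} (hs : 0 < s)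
    (hy : 0 < y) (x : E) :
    csExt s (∑ i, f i : 𝓢(E, ℝ)) x y = ∑ i, csExt s (f i) x y := by
  simp only [csExt, bracketConv_sum f (csExponent_pos hs).le hy x, Finset.mul_sum]

theorem hasFDerivAt_csExt (f : 𝓢(E, ℝ)) {s y : ℝ} (hs : 0 < s) (hy : 0 < y) (x : E) :
    ∃ L : E →L[ℝ] ℝ, HasFDerivAt (fun x => csExt s f x y) L x ∧
      ∀ e, L e = csExt s (∂_{e} f : 𝓢(E, ℝ)) x y := by
  obtain ⟨L, hL, hLe⟩ := hasFDerivAt_bracketConv f (finrank_lt_csExponent hs) hy x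
  refine ⟨_, (hL.const_mul (y ^ (2 * s))).const_mul (csMass E s)⁻¹, fun e => ?_⟩
  simp [csExt, hLe]

theorem tendsto_csExt (f : 𝓢(E, ℝ)) {s : ℝ} (hs : 0 < s) (x : E) :
    Tendsto (csExt s f x) (𝓝[>] 0) (𝓝 (f x)) := by
  have h := (tendsto_bracketConv f (finrank_lt_csExponent hs) x).const_mul (csMass E s)⁻¹
  rw [two_mul_csExponent_sub, ← csMass, inv_mul_cancel_left₀ (csMass_pos hs).ne'] at h
  exact h

theorem measurable_csExt (s : ℝ) {f : E → ℝ} (hf : Measurable f) :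
    Measurable fun p : ℝ × E => csExt s f p.2 p.1 := by
  have := measurable_bracketConv (csExponent E s) hf
  unfold csExt
  fun_prop

theorem measurable_csFlux (s : ℝ) {f : E → ℝ} (hf : Measurable f) :
    Measurable fun p : ℝ × E => csFlux s f p.2 p.1 := by
  have := measurable_bracketConv (csExponent E s) hf
  have := measurable_bracketConv (csExponent E s + 1) hf
  unfold csFlux
  fun_prop

theorem SchwartzMap.lintegral_sq_ne_top (f : 𝓢(E, ℝ)) : ∫⁻ x, ‖f x‖ₑ ^ 2 ≠ ⊤ := by
  have h := (f.memLp 2).2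
  rw [eLpNorm_lt_top_iff_lintegral_rpow_enorm_lt_top (by simp) (by simp)] at h
  simpa using h.ne

theorem lintegral_csFlux_sub_sq_le (f : 𝓢(E, ℝ)) {s y : ℝ} (hs : s ∈ Set.Ioo (0 : ℝ) 1)
    (hy : 0 < y) (hy1 : y < 1) (g : 𝓢(E, ℝ))
    (hg : ∀ x, ∀ t, 0 < t → HasDerivAt (csFlux s f x) (t ^ (1 - 2 * s) * -csExt s g x t) t) :
    ∫⁻ x, ‖csFlux s f x 1 - csFlux s f x y‖ₑ ^ 2 ≤ ENNReal.ofReal (1 / (2 - 2 * s)) *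
      (ENNReal.ofReal (1 / (2 - 2 * s)) * ∫⁻ x, ‖g x‖ₑ ^ 2) := by
  have h := lintegral_enorm_sub_sq_le_of_forall_le (volume : Measure E) (f := csFlux s f)
    (h := fun x t => -csExt s g x t) (f₀ := fun x => csFlux s f x y) (a := y) (b := 1)
    (β := 2 - 2 * s) (A := ∫⁻ x, ‖g x‖ₑ ^ 2) hy.le hy1 (by linarith [hs.2])
    (fun x t ht => by
      rw [show 2 - 2 * s - 1 = 1 - 2 * s by ring]
      exact hg x t (hy.trans ht.1))
    (fun x => continuousOn_of_forall_continuousAt fun t ht =>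
      (hasDerivAt_csExt hs.1 (hy.trans ht.1) g.integrable x).continuousAt.neg)
    (fun x => (hg x y hy).continuousAt.tendsto.mono_left nhdsWithin_le_nhds)
    (measurable_csExt s g.continuous.measurable).neg.aemeasurable
    (fun t ht => by
      simp only [enorm_neg]
      exact lintegral_csExt_sq_le hs.1 (hy.trans ht.1) g.integrable g.continuous.measurable)
  rwa [Real.one_rpow] at h

theorem lintegral_csFlux_sq_le_of_one_le (f : 𝓢(E, ℝ)) {s y : ℝ} (hs : 0 < s) (hy : 1 ≤ y) :
    ∫⁻ x, ‖csFlux s f x y‖ₑ ^ 2 ≤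
      ENNReal.ofReal ((2 * s + 2 * csExponent E s) ^ 2) * ∫⁻ x, ‖f x‖ₑ ^ 2 := by
  refine (lintegral_csFlux_sq_le hs (by linarith) f.integrable f.continuous.measurable).trans ?_
  gcongr
  refine mul_le_of_le_one_right (by positivity) (Real.rpow_le_one_of_one_le_of_nonpos hy ?_)
  linarith

theorem measurable_csFlux_left (s : ℝ) {f : E → ℝ} (hf : Measurable f) (y : ℝ) :
    Measurable fun x => csFlux s f x y :=
  (measurable_csFlux s hf).comp (g := fun p : ℝ × E => csFlux s f p.2 p.1)
    (f := fun x => (y, x)) measurable_prodMk_left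

theorem measurable_csExt_left (s : ℝ) {f : E → ℝ} (hf : Measurable f) (y : ℝ) :
    Measurable fun x => csExt s f x y :=
  (measurable_csExt s hf).comp (measurable_prodMk_left (x := y))

theorem exists_lintegral_csFlux_sq_le (f : 𝓢(E, ℝ)) {s : ℝ} (hs : s ∈ Set.Ioo (0 : ℝ) 1) :
    ∃ C : ℝ≥0∞, C ≠ ⊤ ∧ ∀ y, 0 < y → ∫⁻ x, ‖csFlux s f x y‖ₑ ^ 2 ≤ C := by
  obtain ⟨A, hA, hlarge⟩ : ∃ A : ℝ≥0∞, A ≠ ⊤ ∧ ∀ y, 1 ≤ y → ∫⁻ x, ‖csFlux s f x y‖ₑ ^ 2 ≤ A :=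
    ⟨_, ENNReal.mul_ne_top ENNReal.ofReal_ne_top f.lintegral_sq_ne_top,
      fun y hy => lintegral_csFlux_sq_le_of_one_le f hs.1 hy⟩
  obtain ⟨B, hB, hsmall⟩ : ∃ B : ℝ≥0∞, B ≠ ⊤ ∧ ∀ y, 0 < y → y < 1 →
      ∫⁻ x, ‖csFlux s f x 1 - csFlux s f x y‖ₑ ^ 2 ≤ B := by
    let b := stdOrthonormalBasis ℝ E
    refine ⟨_, ENNReal.mul_ne_top ENNReal.ofReal_ne_top (ENNReal.mul_ne_top ENNReal.ofReal_ne_top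
      (∑ i, ∂_{b i} (∂_{b i} f) : 𝓢(E, ℝ)).lintegral_sq_ne_top), fun y hy hy1 =>
      lintegral_csFlux_sub_sq_le f hs hy hy1 _ fun x t ht => ?_⟩
    rw [csExt_sum _ hs.1 ht]
    exact hasDerivAt_csFlux b hs.1 ht f x
  refine ⟨A + 2 * (A + B), by finiteness, fun y hy => ?_⟩
  rcases le_or_gt 1 y with h1 | h1
  · exact (hlarge y h1).trans le_self_add
  refine le_trans ?_ le_add_self
  have hm : Measurable fun x => csFlux s f x 1 - csFlux s f x y :=
    (measurable_csFlux_left s f.continuous.measurable 1).sub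
      (measurable_csFlux_left s f.continuous.measurable y)
  have h2 := lintegral_enorm_add_sq_le (volume : Measure E) (fun x => csFlux s f x 1)
    (g := fun x => -(csFlux s f x 1 - csFlux s f x y)) hm.neg.aemeasurable
  simp only [enorm_neg, ← sub_eq_add_neg, sub_sub_cancel] at h2
  refine h2.trans ?_
  gcongr
  · exact hlarge 1 le_rfl
  · exact hsmall y hy h1

theorem exists_lintegral_csExt_sub_sq_le (f : 𝓢(E, ℝ)) {s : ℝ} (hs : s ∈ Set.Ioo (0 : ℝ) 1) :
    ∃ C : ℝ≥0∞, C ≠ ⊤ ∧ ∀ y, 0 < y →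
      ∫⁻ x, ‖csExt s f x y - f x‖ₑ ^ 2 ≤ C * ENNReal.ofReal (y ^ (2 * s)) := by
  obtain ⟨A, hA, hflux⟩ := exists_lintegral_csFlux_sq_le f hs
  obtain ⟨hs0, hs1⟩ := hs
  obtain ⟨B, hBeq⟩ : ∃ B, B = ∫⁻ x, ‖f x‖ₑ ^ 2 := ⟨_, rfl⟩
  have hB : B ≠ ⊤ := hBeq ▸ f.lintegral_sq_ne_top
  obtain ⟨D, hDeq⟩ : ∃ D, D = ENNReal.ofReal (1 / (2 * s)) := ⟨_, rfl⟩
  have hD : D ≠ ⊤ := hDeq ▸ ENNReal.ofReal_ne_top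
  refine ⟨2 * (B + B) + D * (D * A), by finiteness, fun y hy => ?_⟩
  rw [add_mul]
  rcases le_or_gt 1 y with h1 | h1
  · refine le_trans ?_ le_self_add
    have h2 := lintegral_enorm_add_sq_le (volume : Measure E) (fun x => csExt s f x y)
      (g := fun x => -f x) f.continuous.measurable.neg.aemeasurable
    simp only [enorm_neg, ← sub_eq_add_neg] at h2
    refine h2.trans ?_
    have h3 : 1 ≤ ENNReal.ofReal (y ^ (2 * s)) := by
      rw [ENNReal.one_le_ofReal]
      exact Real.one_le_rpow h1 (by linarith)
    refine le_trans ?_ (le_mul_of_one_le_right (by simp) h3)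
    rw [← hBeq]
    gcongr
    rw [hBeq]
    exact lintegral_csExt_sq_le hs0 hy f.integrable f.continuous.measurable
  · refine le_trans ?_ le_add_self
    have h2 := lintegral_enorm_sub_sq_le_of_forall_le (volume : Measure E) (f := csExt s f)
      (h := csFlux s f) (f₀ := f) (a := 0) (b := y) (β := 2 * s) (A := A) le_rfl hy (by linarith)
      (fun x t ht => hasDerivAt_csExt hs0 ht.1 f.integrable x)
      (fun x => continuousOn_of_forall_continuousAt fun t ht =>
        (hasDerivAt_csFlux (stdOrthonormalBasis ℝ E) hs0 ht.1 f x).continuousAt)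
      (fun x => tendsto_csExt f hs0 x)
      (measurable_csFlux s f.continuous.measurable).aemeasurable (fun t ht => hflux t ht.1)
    have h3 : ENNReal.ofReal (y ^ (2 * s) / (2 * s)) ≤ D := by
      rw [hDeq]
      refine ENNReal.ofReal_le_ofReal ?_
      gcongr
      exact Real.rpow_le_one hy.le h1.le (by linarith)
    have h4 : ENNReal.ofReal (y ^ (2 * s) / (2 * s)) = ENNReal.ofReal (y ^ (2 * s)) * D := by
      rw [div_eq_mul_one_div, ENNReal.ofReal_mul (by positivity), hDeq]
    calc _ ≤ _ := h2
      _ ≤ ENNReal.ofReal (y ^ (2 * s)) * D * (D * A) := by rw [← h4]; gcongr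
      _ = _ := by ring

end Extension

section Slab

variable {E : Type*} [NormedAddCommGroup E] [NormedSpace ℝ E] [MeasurableSpace E]
  [BorelSpace E] [FiniteDimensional ℝ E]

theorem integral_add_mul_lineDeriv_eq_zero (μ : Measure E) [μ.IsAddHaarMeasure]
    {f f' g g' : E → ℝ} {e : E}
    (hf'g : Integrable (fun x => f' x * g x) μ) (hfg' : Integrable (fun x => f x * g' x) μ)
    (hfg : Integrable (fun x => f x * g x) μ) (hf : ∀ x, HasLineDerivAt ℝ f (f' x) x e)
    (hg : ∀ x, HasLineDerivAt ℝ g (g' x) x e) :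
    ∫ x, (f x * g' x + f' x * g x) ∂μ = 0 := by
  have h := integral_bilinear_hasLineDerivAt_right_eq_neg_left_of_integrable (μ := μ)
    (B := ContinuousLinearMap.mul ℝ ℝ) hf'g hfg' hfg (fun x _ => hf x) (fun x _ => hg x)
  simp only [ContinuousLinearMap.mul_apply'] at h
  rw [integral_add hfg' hf'g, h, neg_add_cancel]

/-- The divergence theorem on a horizontal slab for the product of a scalar function with the
divergence-free field `(Z, G)`. -/
theorem integral_slab_eq_sub (μ : Measure E) [μ.IsAddHaarMeasure] {ι : Type*} [Fintype ι]
    {e : ι → E} {a b : ℝ} (hab : a ≤ b)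
    {G φ φ' : E → ℝ → ℝ} {Z Z' φx : ι → E → ℝ → ℝ}
    (hG : ∀ x, ∀ t ∈ Set.Icc a b, HasDerivAt (G x) (-∑ i, Z' i x t) t)
    (hφ : ∀ x, ∀ t ∈ Set.Icc a b, HasDerivAt (φ x) (φ' x t) t)
    (hZ : ∀ i x, ∀ t ∈ Set.Icc a b, HasLineDerivAt ℝ (fun x => Z i x t) (Z' i x t) x (e i))
    (hφx : ∀ i x, ∀ t ∈ Set.Icc a b, HasLineDerivAt ℝ (fun x => φ x t) (φx i x t) x (e i))
    (mG : MemLp (fun p : ℝ × E => G p.2 p.1) 2 ((volume.restrict (Set.Ioc a b)).prod μ))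
    (mφ : MemLp (fun p : ℝ × E => φ p.2 p.1) 2 ((volume.restrict (Set.Ioc a b)).prod μ))
    (mφ' : MemLp (fun p : ℝ × E => φ' p.2 p.1) 2 ((volume.restrict (Set.Ioc a b)).prod μ))
    (mZ : ∀ i, MemLp (fun p : ℝ × E => Z i p.2 p.1) 2 ((volume.restrict (Set.Ioc a b)).prod μ))
    (mZ' : ∀ i, MemLp (fun p : ℝ × E => Z' i p.2 p.1) 2 ((volume.restrict (Set.Ioc a b)).prod μ))
    (mφx : ∀ i, MemLp (fun p : ℝ × E => φx i p.2 p.1) 2 ((volume.restrict (Set.Ioc a b)).prod μ))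
    (ha : Integrable (fun x => G x a * φ x a) μ) (hb : Integrable (fun x => G x b * φ x b) μ) :
    ∫ p : ℝ × E, (G p.2 p.1 * φ' p.2 p.1 + ∑ i, Z i p.2 p.1 * φx i p.2 p.1)
        ∂((volume.restrict (Set.Ioc a b)).prod μ) =
      ∫ x, G x b * φ x b ∂μ - ∫ x, G x a * φ x a ∂μ := by
  have iGφ' := mG.integrable_mul mφ'
  have iZφx := fun i => (mZ i).integrable_mul (mφx i)
  have iZ'φ := fun i => (mZ' i).integrable_mul mφ
  have iZφ := fun i => (mZ i).integrable_mul mφ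
  simp only [Pi.mul_def] at iGφ' iZφx iZ'φ iZφ
  have iP : Integrable (fun p : ℝ × E => (-∑ i, Z' i p.2 p.1) * φ p.2 p.1 + G p.2 p.1 * φ' p.2 p.1)
      ((volume.restrict (Set.Ioc a b)).prod μ) := by
    refine Integrable.add ?_ iGφ'
    simp only [neg_mul, Finset.sum_mul]
    exact (integrable_finsetSum _ fun i _ => iZ'φ i).neg
  have iR : Integrable (fun p : ℝ × E => ∑ i, (Z i p.2 p.1 * φx i p.2 p.1 + Z' i p.2 p.1 * φ p.2 p.1))
      ((volume.restrict (Set.Ioc a b)).prod μ) :=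
    integrable_finsetSum _ fun i _ => (iZφx i).add (iZ'φ i)
  have hR : ∫ p : ℝ × E, (∑ i, (Z i p.2 p.1 * φx i p.2 p.1 + Z' i p.2 p.1 * φ p.2 p.1))
      ∂((volume.restrict (Set.Ioc a b)).prod μ) = 0 := by
    rw [integral_prod _ iR]
    refine integral_eq_zero_of_ae ?_
    filter_upwards [ae_restrict_mem measurableSet_Ioc,
      ae_all_iff.2 fun i => (iZφx i).prod_right_ae, ae_all_iff.2 fun i => (iZ'φ i).prod_right_ae,
      ae_all_iff.2 fun i => (iZφ i).prod_right_ae] with t ht h1 h2 h3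
    have h4 : ∀ i, Integrable (fun x => Z i x t * φx i x t + Z' i x t * φ x t) μ :=
      fun i => (h1 i).add (h2 i)
    refine (integral_finsetSum _ fun i _ => h4 i).trans ?_
    refine Finset.sum_eq_zero fun i _ => ?_
    exact integral_add_mul_lineDeriv_eq_zero μ (h2 i) (h1 i) (h3 i)
      (fun x => hZ i x t (Set.Ioc_subset_Icc_self ht))
      (fun x => hφx i x t (Set.Ioc_subset_Icc_self ht))
  have hP : ∫ p : ℝ × E, ((-∑ i, Z' i p.2 p.1) * φ p.2 p.1 + G p.2 p.1 * φ' p.2 p.1)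
      ∂((volume.restrict (Set.Ioc a b)).prod μ) =
      ∫ x, G x b * φ x b ∂μ - ∫ x, G x a * φ x a ∂μ := by
    rw [integral_prod_symm _ iP, ← integral_sub hb ha]
    refine integral_congr_ae ?_
    filter_upwards [iP.prod_left_ae] with x hx
    rw [← intervalIntegral.integral_of_le hab]
    refine intervalIntegral.integral_eq_sub_of_hasDerivAt (f := fun t => G x t * φ x t)
      (fun t ht => ?_) ((intervalIntegrable_iff_integrableOn_Ioc_of_le hab).2 hx)
    rw [Set.uIcc_of_le hab] at ht
    exact (hG x t ht).mul (hφ x t ht)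
  refine Eq.trans ?_ ((integral_add iP iR).trans (by rw [hP, hR, add_zero]))
  refine integral_congr_ae (.of_forall fun p => ?_)
  simp only [Finset.sum_add_distrib, neg_mul, Finset.sum_mul]
  ring

theorem memLp_two_slab {X : Type*} [MeasurableSpace X] (μ : Measure X) [SFinite μ] {g : ℝ × X → ℝ} {a b : ℝ}
    (hg : AEStronglyMeasurable g ((volume.restrict (Set.Ioc a b)).prod μ)) {C : ℝ≥0∞} (hC : C ≠ ⊤)
    (h : ∀ t ∈ Set.Ioc a b, ∫⁻ x, ‖g (t, x)‖ₑ ^ 2 ∂μ ≤ C) :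
    MemLp g 2 ((volume.restrict (Set.Ioc a b)).prod μ) := by
  refine ⟨hg, ?_⟩
  rw [eLpNorm_lt_top_iff_lintegral_rpow_enorm_lt_top (by simp) (by simp)]
  simp only [ENNReal.toReal_ofNat, ENNReal.rpow_ofNat]
  rw [lintegral_prod _ (hg.enorm.pow_const 2)]
  refine (setLIntegral_mono' measurableSet_Ioc h).trans_lt ?_
  rw [lintegral_const]
  exact ENNReal.mul_lt_top hC.lt_top (by simp)

theorem memLp_two_of_lintegral_ne_top {α : Type*} [MeasurableSpace α] {μ : Measure α} {g : α → ℝ}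
    (hg : AEStronglyMeasurable g μ) (h : ∫⁻ x, ‖g x‖ₑ ^ 2 ∂μ ≠ ⊤) : MemLp g 2 μ := by
  refine ⟨hg, ?_⟩
  rw [eLpNorm_lt_top_iff_lintegral_rpow_enorm_lt_top (by simp) (by simp)]
  simpa using h.lt_top

theorem exists_rpow_le (p : ℝ) {a : ℝ} (ha : 0 < a) (b : ℝ) :
    ∃ M, ∀ t ∈ Set.Icc a b, t ^ p ≤ M := by
  have h : ContinuousOn (fun t : ℝ => t ^ p) (Set.Icc a b) :=
    continuousOn_id.rpow_const fun t ht => Or.inl (ha.trans_le ht.1).ne'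
  obtain ⟨M, hM⟩ := isCompact_Icc.bddAbove_image h
  exact ⟨M, fun t ht => hM (Set.mem_image_of_mem _ ht)⟩

theorem ContinuousOn.aestronglyMeasurable_slab {μ : Measure E} [SFinite μ] {g : ℝ × E → ℝ}
    (hg : ContinuousOn g {p | 0 < p.1}) {a b : ℝ} (ha : 0 ≤ a) :
    AEStronglyMeasurable g ((volume.restrict (Set.Ioc a b)).prod μ) := by
  have h : (volume.restrict (Set.Ioc a b)).prod μ =
      ((volume : Measure ℝ).prod μ).restrict (Set.Ioc a b ×ˢ Set.univ) := by
    rw [← Measure.prod_restrict, Measure.restrict_univ]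
  rw [h]
  exact (hg.mono fun p hp => ha.trans_lt hp.1.1).aestronglyMeasurable
    (measurableSet_Ioc.prod .univ)

end Slab

theorem OrthonormalBasis.sum_apply_sq {ι E : Type*} [Fintype ι] [NormedAddCommGroup E]
    [InnerProductSpace ℝ E] [CompleteSpace E] (b : OrthonormalBasis ι ℝ E) (L : E →L[ℝ] ℝ) :
    ∑ i, L (b i) ^ 2 = ‖L‖ ^ 2 := by
  obtain ⟨z, rfl⟩ := (InnerProductSpace.toDual ℝ E).surjective L
  simpa using b.sum_sq_norm_inner_left z

section HalfSpace

variable {E : Type*} [NormedAddCommGroup E] [NormedSpace ℝ E] {v : E → ℝ → ℝ}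

theorem ContDiffOn.hasFDerivAt_halfSpace
    (hv : ContDiffOn ℝ 1 (fun p : E × ℝ => v p.1 p.2) {p : E × ℝ | 0 < p.2}) (x : E) {y : ℝ}
    (hy : 0 < y) :
    HasFDerivAt (fun p : E × ℝ => v p.1 p.2) (fderiv ℝ (fun p : E × ℝ => v p.1 p.2) (x, y)) (x, y) :=
  ((hv.differentiableOn one_ne_zero).differentiableAt
    ((isOpen_lt continuous_const continuous_snd).mem_nhds hy)).hasFDerivAt

theorem ContDiffOn.hasFDerivAt_fst
    (hv : ContDiffOn ℝ 1 (fun p : E × ℝ => v p.1 p.2) {p : E × ℝ | 0 < p.2}) (x : E) {y : ℝ}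
    (hy : 0 < y) :
    HasFDerivAt (fun x' => v x' y) ((fderiv ℝ (fun p : E × ℝ => v p.1 p.2) (x, y)).comp
      (ContinuousLinearMap.inl ℝ E ℝ)) x :=
  (hv.hasFDerivAt_halfSpace x hy).comp (f := fun x' => (x', y)) x (hasFDerivAt_prodMk_left x y)

theorem ContDiffOn.hasDerivAt_snd
    (hv : ContDiffOn ℝ 1 (fun p : E × ℝ => v p.1 p.2) {p : E × ℝ | 0 < p.2}) (x : E) {y : ℝ}
    (hy : 0 < y) :
    HasDerivAt (v x) (fderiv ℝ (fun p : E × ℝ => v p.1 p.2) (x, y) (0, 1)) y := by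
  have h := ((hv.hasFDerivAt_halfSpace x hy).comp (f := fun t => (x, t)) y
    (hasFDerivAt_prodMk_right x y)).hasDerivAt
  exact h.congr_deriv (by simp)

theorem ContDiffOn.continuousOn_fderiv_halfSpace
    (hv : ContDiffOn ℝ 1 (fun p : E × ℝ => v p.1 p.2) {p : E × ℝ | 0 < p.2}) (e : E × ℝ) :
    ContinuousOn (fun p : ℝ × E => fderiv ℝ (fun p : E × ℝ => v p.1 p.2) (p.2, p.1) e)
      {p | 0 < p.1} :=
  ((hv.continuousOn_fderiv_of_isOpen (isOpen_lt continuous_const continuous_snd) le_rfl).clm_apply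
    continuousOn_const).comp continuous_swap.continuousOn fun _ hp => hp

theorem ContDiffOn.continuousOn_fderiv_fst
    (hv : ContDiffOn ℝ 1 (fun p : E × ℝ => v p.1 p.2) {p : E × ℝ | 0 < p.2}) (e : E) :
    ContinuousOn (fun p : ℝ × E => fderiv ℝ (fun x' => v x' p.1) p.2 e) {p | 0 < p.1} :=
  (hv.continuousOn_fderiv_halfSpace (e, 0)).congr fun p hp => by
    simp [(hv.hasFDerivAt_fst p.2 hp).fderiv]

theorem ContDiffOn.continuousOn_deriv_snd
    (hv : ContDiffOn ℝ 1 (fun p : E × ℝ => v p.1 p.2) {p : E × ℝ | 0 < p.2}) :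
    ContinuousOn (fun p : ℝ × E => deriv (v p.2) p.1) {p | 0 < p.1} :=
  (hv.continuousOn_fderiv_halfSpace (0, 1)).congr fun p hp =>
    (hv.hasDerivAt_snd p.2 hp).deriv

theorem ContDiffOn.continuousOn_left_halfSpace
    (hv₁ : ContDiffOn ℝ 1 (fun p : E × ℝ => v p.1 p.2) {p : E × ℝ | 0 < p.2}) :
    ContinuousOn (fun p : ℝ × E => v p.2 p.1) {p | 0 < p.1} :=
  hv₁.continuousOn.comp continuous_swap.continuousOn fun _ hp => hp

theorem ContDiffOn.continuous_left_halfSpace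
    (hv₁ : ContDiffOn ℝ 1 (fun p : E × ℝ => v p.1 p.2) {p : E × ℝ | 0 < p.2}) {y : ℝ}
    (hy : 0 < y) : Continuous fun x => v x y :=
  continuous_iff_continuousAt.2 fun x => (hv₁.hasFDerivAt_fst x hy).continuousAt

end HalfSpace

section Energy

open scoped SchwartzMap LineDeriv

variable {E : Type*} [NormedAddCommGroup E] [InnerProductSpace ℝ E] [MeasurableSpace E]
  [BorelSpace E] [FiniteDimensional ℝ E]

/-- The weighted Dirichlet energy of a function on the half-space. -/
noncomputable def csEnergy (s : ℝ) (v : E → ℝ → ℝ) : ℝ≥0∞ :=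
  ∫⁻ y in Set.Ioi (0 : ℝ), ∫⁻ x : E, ENNReal.ofReal (y ^ (1 - 2 * s) *
    (‖fderiv ℝ (fun x' => v x' y) x‖ ^ 2 + (deriv (fun t => v x t) y) ^ 2))

theorem lintegral_slab_le_csEnergy {s a b : ℝ} (ha : 0 ≤ a) {v : E → ℝ → ℝ} {g : E → ℝ → ℝ}
    (hg : ∀ x y, 0 < y →
      g x y ≤ ‖fderiv ℝ (fun x' => v x' y) x‖ ^ 2 + (deriv (fun t => v x t) y) ^ 2) :
    ∫⁻ y in Set.Ioc a b, ∫⁻ x, ENNReal.ofReal (y ^ (1 - 2 * s) * g x y) ≤ csEnergy s v := by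
  refine le_trans ?_ (lintegral_mono_set
    (fun y hy => ha.trans_lt hy.1 : Set.Ioc a b ⊆ Set.Ioi (0 : ℝ)))
  refine setLIntegral_mono' measurableSet_Ioc fun y hy => lintegral_mono fun x => ?_
  have hy0 : 0 < y := ha.trans_lt hy.1
  gcongr
  exact hg x y hy0

theorem memLp_slab_of_csEnergy {s a b : ℝ} (ha : 0 < a) {v : E → ℝ → ℝ} (hfin : csEnergy s v ≠ ⊤)
    {g : E → ℝ → ℝ}
    (hgm : AEStronglyMeasurable (fun p : ℝ × E => g p.2 p.1)
      ((volume.restrict (Set.Ioc a b)).prod volume))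
    (hg : ∀ x y, 0 < y →
      g x y ^ 2 ≤ ‖fderiv ℝ (fun x' => v x' y) x‖ ^ 2 + (deriv (fun t => v x t) y) ^ 2) :
    MemLp (fun p : ℝ × E => g p.2 p.1) 2 ((volume.restrict (Set.Ioc a b)).prod volume) := by
  refine memLp_two_of_lintegral_ne_top hgm ?_
  obtain ⟨M, hM⟩ := exists_rpow_le (-(1 - 2 * s)) ha b
  refine ne_top_of_le_ne_top (ENNReal.mul_ne_top (ENNReal.ofReal_ne_top (r := M)) hfin) ?_
  rw [lintegral_prod _ (hgm.enorm.pow_const 2)]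
  refine le_trans ?_ (mul_le_mul_right (lintegral_slab_le_csEnergy (b := b) ha.le hg) _)
  rw [← lintegral_const_mul' _ _ ENNReal.ofReal_ne_top]
  refine setLIntegral_mono' measurableSet_Ioc fun y hy => ?_
  rw [← lintegral_const_mul' _ _ ENNReal.ofReal_ne_top]
  refine lintegral_mono fun x => ?_
  have hy0 : 0 < y := ha.trans hy.1
  have h1 : y ^ (-(1 - 2 * s)) ≤ M := hM y (Set.Ioc_subset_Icc_self hy)
  simp only [enorm_sq_eq_ofReal]
  rw [← ENNReal.ofReal_mul ((by positivity : 0 ≤ y ^ (-(1 - 2 * s))).trans h1)]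
  refine ENNReal.ofReal_le_ofReal ?_
  calc g x y ^ 2 = y ^ (-(1 - 2 * s)) * (y ^ (1 - 2 * s) * g x y ^ 2) := by
        rw [← mul_assoc, ← Real.rpow_add hy0]; simp
    _ ≤ _ := by gcongr

theorem memLp_slab_rpow_mul (r : ℝ) {a b : ℝ} (ha : 0 < a) {g : E → ℝ → ℝ}
    (hg : MemLp (fun p : ℝ × E => g p.2 p.1) 2 ((volume.restrict (Set.Ioc a b)).prod volume)) :
    MemLp (fun p : ℝ × E => p.1 ^ r * g p.2 p.1) 2
      ((volume.restrict (Set.Ioc a b)).prod volume) := by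
  obtain ⟨M, hM⟩ := exists_rpow_le r ha b
  have hm : Measurable fun p : ℝ × E => p.1 ^ r := by fun_prop
  refine hg.of_le_mul (c := M) (hm.aestronglyMeasurable.mul hg.1) ?_
  filter_upwards [Measure.quasiMeasurePreserving_fst.ae (ae_restrict_mem measurableSet_Ioc)] with p hp
  have := ha.trans hp.1
  rw [norm_mul, Real.norm_of_nonneg (by positivity)]
  gcongr
  exact hM _ (Set.Ioc_subset_Icc_self hp)

theorem lintegral_sub_trace_sq_le {s : ℝ} (hs : s ∈ Set.Ioo (0 : ℝ) 1) {v : E → ℝ → ℝ}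
    {u : E → ℝ} (hv₁ : ContDiffOn ℝ 1 (fun p : E × ℝ => v p.1 p.2) {p : E × ℝ | 0 < p.2})
    (hv₂ : ContinuousOn (fun p : E × ℝ => v p.1 p.2) {p : E × ℝ | 0 ≤ p.2})
    (hv₃ : ∀ x, v x 0 = u x) {y : ℝ} (hy : 0 < y) :
    ∫⁻ x, ‖v x y - u x‖ₑ ^ 2 ≤ ENNReal.ofReal (y ^ (2 * s) / (2 * s)) * csEnergy s v := by
  have hderiv : ∀ x t, 0 < t → HasDerivAt (v x) (deriv (v x) t) t := fun x t ht =>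
    (hv₁.hasDerivAt_snd x ht).differentiableAt.hasDerivAt
  have hone : ∀ t : ℝ, 0 < t → t ^ (2 * s - 1) * t ^ (1 - 2 * s) = 1 := fun t ht => by
    rw [← Real.rpow_add ht]; simp
  have hcont : ContinuousOn (fun p : ℝ × E => p.1 ^ (1 - 2 * s) * deriv (v p.2) p.1)
      {p | 0 < p.1} :=
    (continuousOn_fst.rpow_const fun p hp => Or.inl (ne_of_gt hp)).mul hv₁.continuousOn_deriv_snd
  refine (lintegral_enorm_sub_sq_le (volume : Measure E) (f := v)
    (h := fun x t => t ^ (1 - 2 * s) * deriv (v x) t) (f₀ := u) (a := 0) (b := y)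
    (β := 2 * s) le_rfl hy (by linarith [hs.1]) (fun x t ht => ?_) (fun x => ?_) (fun x => ?_)
    (hcont.aestronglyMeasurable_slab le_rfl).aemeasurable).trans ?_
  · rw [← mul_assoc, hone t ht.1, one_mul]
    exact hderiv x t ht.1
  · exact hcont.comp (f := fun t => (t, x)) (by fun_prop) fun t ht => ht.1
  · have h := (hv₂ (x, 0) (by simp)).tendsto
    have h2 : Tendsto (fun t : ℝ => (x, t)) (𝓝[>] 0) (𝓝[{p : E × ℝ | 0 ≤ p.2}] (x, 0)) := by
      refine tendsto_nhdsWithin_iff.2 ⟨?_, ?_⟩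
      · exact (Continuous.tendsto (by fun_prop) (0 : ℝ)).mono_left nhdsWithin_le_nhds
      · filter_upwards [self_mem_nhdsWithin] with t ht using le_of_lt ht
    rw [← hv₃]
    exact h.comp h2
  · gcongr
    refine le_trans (le_of_eq ?_) (lintegral_slab_le_csEnergy (a := 0) (b := y)
      (g := fun x t => deriv (v x) t ^ 2) le_rfl
      fun x y _ => le_add_of_nonneg_left (by positivity))
    refine setLIntegral_congr_fun measurableSet_Ioc fun t ht => lintegral_congr fun x => ?_
    have ht0 : 0 < t := ht.1
    rw [enorm_sq_eq_ofReal, ← ENNReal.ofReal_mul (by positivity)]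
    congr 1
    linear_combination (t ^ (1 - 2 * s) * deriv (v x) t ^ 2) * hone t ht0

theorem exists_lintegral_sub_csExt_sq_le {s : ℝ} (hs : s ∈ Set.Ioo (0 : ℝ) 1) {v : E → ℝ → ℝ}
    (u : 𝓢(E, ℝ)) (hv₁ : ContDiffOn ℝ 1 (fun p : E × ℝ => v p.1 p.2) {p : E × ℝ | 0 < p.2})
    (hv₂ : ContinuousOn (fun p : E × ℝ => v p.1 p.2) {p : E × ℝ | 0 ≤ p.2})
    (hv₃ : ∀ x, v x 0 = u x) (hfin : csEnergy s v ≠ ⊤) :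
    ∃ C : ℝ≥0∞, C ≠ ⊤ ∧ ∀ y, 0 < y →
      ∫⁻ x, ‖v x y - csExt s u x y‖ₑ ^ 2 ≤ C * ENNReal.ofReal (y ^ (2 * s)) := by
  obtain ⟨A, hA, hext⟩ := exists_lintegral_csExt_sub_sq_le u hs
  have hs0 := hs.1
  refine ⟨2 * (ENNReal.ofReal (1 / (2 * s)) * csEnergy s v + A), by finiteness, fun y hy => ?_⟩
  have h := lintegral_enorm_add_sq_le (volume : Measure E) (fun x => v x y - u x)
    (g := fun x => -(csExt s u x y - u x)) ((measurable_csExt_left s u.continuous.measurable y).sub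
      u.continuous.measurable).neg.aemeasurable
  simp only [enorm_neg, ← sub_eq_add_neg, sub_sub_sub_cancel_right] at h
  refine h.trans ?_
  rw [mul_assoc, add_mul]
  gcongr
  · refine (lintegral_sub_trace_sq_le hs hv₁ hv₂ hv₃ hy).trans_eq ?_
    rw [div_eq_mul_one_div, ENNReal.ofReal_mul (by positivity)]
    ring
  · exact hext y hy

end Energy

section Minimality

open scoped SchwartzMap LineDeriv

variable {E : Type*} [NormedAddCommGroup E] [InnerProductSpace ℝ E] [MeasurableSpace E]
  [BorelSpace E] [FiniteDimensional ℝ E]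

theorem enorm_integral_mul_sq_le {α : Type*} [MeasurableSpace α] (μ : Measure α) {f g : α → ℝ}
    (hf : AEMeasurable f μ) (hg : AEMeasurable g μ) :
    ‖∫ x, f x * g x ∂μ‖ₑ ^ 2 ≤ (∫⁻ x, ‖f x‖ₑ ^ 2 ∂μ) * ∫⁻ x, ‖g x‖ₑ ^ 2 ∂μ := by
  refine le_trans ?_ (lintegral_mul_sq_le μ hf.enorm hg.enorm)
  gcongr
  refine (enorm_integral_le_lintegral_enorm _).trans_eq ?_
  simp only [enorm_mul]

theorem tendsto_zero_of_enorm_sq_le {ι : Type*} {l : Filter ι} {F g : ι → ℝ} {C : ℝ≥0∞}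
    (hC : C ≠ ⊤) (h : ∀ᶠ i in l, ‖F i‖ₑ ^ 2 ≤ C * ENNReal.ofReal (g i))
    (hg : Tendsto g l (𝓝 0)) : Tendsto F l (𝓝 0) := by
  have h1 : Tendsto (fun i => C * ENNReal.ofReal (g i)) l (𝓝 0) := by
    have := ENNReal.Tendsto.const_mul (ENNReal.tendsto_ofReal hg) (Or.inr hC)
    simpa using this
  have h2 : Tendsto (fun i => ‖F i‖ₑ ^ 2) l (𝓝 0) :=
    tendsto_of_tendsto_of_tendsto_of_le_of_le' tendsto_const_nhds h1
      (.of_forall fun _ => zero_le) h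
  have h3 := (ENNReal.tendsto_toReal ENNReal.zero_ne_top).comp h2
  simp only [Function.comp_def, enorm_sq_eq_ofReal, ENNReal.toReal_zero,
    ENNReal.toReal_ofReal (sq_nonneg _)] at h3
  have h4 := h3.sqrt
  simp only [Real.sqrt_sq_eq_abs, Real.sqrt_zero] at h4
  exact (tendsto_zero_iff_abs_tendsto_zero F).2 h4

theorem fderiv_csExt_apply (f : 𝓢(E, ℝ)) {s y : ℝ} (hs : 0 < s) (hy : 0 < y) (x e : E) :
    fderiv ℝ (fun x => csExt s f x y) x e = csExt s (∂_{e} f : 𝓢(E, ℝ)) x y := by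
  obtain ⟨L, hL, hLe⟩ := hasFDerivAt_csExt f hs hy x
  rw [hL.fderiv, hLe]

theorem hasLineDerivAt_csExt (f : 𝓢(E, ℝ)) {s y : ℝ} (hs : 0 < s) (hy : 0 < y) (x e : E) :
    HasLineDerivAt ℝ (fun x => csExt s f x y) (csExt s (∂_{e} f : 𝓢(E, ℝ)) x y) x e := by
  obtain ⟨L, hL, hLe⟩ := hasFDerivAt_csExt f hs hy x
  rw [← hLe]
  exact hL.hasLineDerivAt e

theorem memLp_slab_csExt (f : 𝓢(E, ℝ)) {s a b : ℝ} (hs : 0 < s) (ha : 0 < a) :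
    MemLp (fun p : ℝ × E => csExt s f p.2 p.1) 2
      ((volume.restrict (Set.Ioc a b)).prod volume) :=
  memLp_two_slab volume (measurable_csExt s f.continuous.measurable).aestronglyMeasurable
    f.lintegral_sq_ne_top fun _ ht =>
      lintegral_csExt_sq_le hs (ha.trans ht.1) f.integrable f.continuous.measurable

theorem memLp_slab_csFlux (f : 𝓢(E, ℝ)) {s a b : ℝ} (hs : s ∈ Set.Ioo (0 : ℝ) 1) (ha : 0 < a) :
    MemLp (fun p : ℝ × E => csFlux s f p.2 p.1) 2
      ((volume.restrict (Set.Ioc a b)).prod volume) := by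
  obtain ⟨C, hC, h⟩ := exists_lintegral_csFlux_sq_le f hs
  exact memLp_two_slab volume (measurable_csFlux s f.continuous.measurable).aestronglyMeasurable
    hC fun t ht => h t (ha.trans ht.1)

theorem memLp_slab_deriv {s a b : ℝ} {v : E → ℝ → ℝ}
    (hv₁ : ContDiffOn ℝ 1 (fun p : E × ℝ => v p.1 p.2) {p : E × ℝ | 0 < p.2})
    (hfin : csEnergy s v ≠ ⊤) (ha : 0 < a) :
    MemLp (fun p : ℝ × E => deriv (v p.2) p.1) 2 ((volume.restrict (Set.Ioc a b)).prod volume) :=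
  memLp_slab_of_csEnergy (g := fun x y => deriv (v x) y) ha hfin
    (hv₁.continuousOn_deriv_snd.aestronglyMeasurable_slab ha.le)
    fun x y _ => le_add_of_nonneg_left (by positivity)

theorem memLp_slab_fderiv_apply {s a b : ℝ} {v : E → ℝ → ℝ}
    (hv₁ : ContDiffOn ℝ 1 (fun p : E × ℝ => v p.1 p.2) {p : E × ℝ | 0 < p.2})
    (hfin : csEnergy s v ≠ ⊤) (ha : 0 < a) {ι : Type*} [Fintype ι] (e : OrthonormalBasis ι ℝ E)
    (i : ι) :
    MemLp (fun p : ℝ × E => fderiv ℝ (fun x => v x p.1) p.2 (e i)) 2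
      ((volume.restrict (Set.Ioc a b)).prod volume) := by
  refine memLp_slab_of_csEnergy (g := fun x y => fderiv ℝ (fun x => v x y) x (e i)) ha hfin
    ((hv₁.continuousOn_fderiv_fst (e i)).aestronglyMeasurable_slab ha.le) fun x y _ => ?_
  rw [← e.sum_apply_sq]
  exact (Finset.single_le_sum (f := fun j => fderiv ℝ (fun x => v x y) x (e j) ^ 2)
    (fun j _ => sq_nonneg _) (Finset.mem_univ i)).trans (le_add_of_nonneg_right (sq_nonneg _))

theorem integrable_slab_sum_sq {s a b : ℝ} (ha : 0 < a) {ι : Type*} [Fintype ι]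
    {X : ι → E → ℝ → ℝ} {Y : E → ℝ → ℝ}
    (hX : ∀ i, MemLp (fun p : ℝ × E => X i p.2 p.1) 2
      ((volume.restrict (Set.Ioc a b)).prod volume))
    (hY : MemLp (fun p : ℝ × E => Y p.2 p.1) 2 ((volume.restrict (Set.Ioc a b)).prod volume)) :
    Integrable (fun p : ℝ × E => p.1 ^ (1 - 2 * s) * (∑ i, X i p.2 p.1 ^ 2 + Y p.2 p.1 ^ 2))
      ((volume.restrict (Set.Ioc a b)).prod volume) := by
  have h1 := integrable_finsetSum Finset.univ fun i _ =>
    (memLp_slab_rpow_mul (1 - 2 * s) ha (hX i)).integrable_mul (hX i)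
  have h2 := (memLp_slab_rpow_mul (1 - 2 * s) ha hY).integrable_mul hY
  refine (h1.add h2).congr (.of_forall fun p => ?_)
  simp only [Pi.add_apply, Pi.mul_apply, mul_add, Finset.mul_sum]
  congr 1
  · exact Finset.sum_congr rfl fun i _ => by ring
  · ring

theorem ae_slab_fst_pos {a b : ℝ} (ha : 0 < a) :
    ∀ᵐ p ∂((volume.restrict (Set.Ioc a b)).prod (volume : Measure E)), 0 < p.1 := by
  filter_upwards [Measure.quasiMeasurePreserving_fst.ae (ae_restrict_mem measurableSet_Ioc)]
    with p hp using ha.trans hp.1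

theorem ofReal_integral_slab_sum_sq {s a b : ℝ} (ha : 0 < a) {ι : Type*} [Fintype ι]
    {X : ι → E → ℝ → ℝ} {Y : E → ℝ → ℝ}
    (hX : ∀ i, MemLp (fun p : ℝ × E => X i p.2 p.1) 2
      ((volume.restrict (Set.Ioc a b)).prod volume))
    (hY : MemLp (fun p : ℝ × E => Y p.2 p.1) 2 ((volume.restrict (Set.Ioc a b)).prod volume)) :
    ENNReal.ofReal (∫ p : ℝ × E, p.1 ^ (1 - 2 * s) * (∑ i, X i p.2 p.1 ^ 2 + Y p.2 p.1 ^ 2)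
        ∂((volume.restrict (Set.Ioc a b)).prod volume)) =
      ∫⁻ y in Set.Ioc a b, ∫⁻ x,
        ENNReal.ofReal (y ^ (1 - 2 * s) * (∑ i, X i x y ^ 2 + Y x y ^ 2)) := by
  have hi := integrable_slab_sum_sq (s := s) ha hX hY
  rw [ofReal_integral_eq_lintegral_ofReal hi ((ae_slab_fst_pos ha).mono fun p hp => by positivity),
    lintegral_prod _ hi.1.aemeasurable.ennreal_ofReal]

theorem weighted_sum_sq_add_le {ι : Type*} [Fintype ι] {ω : ℝ} (hω : 0 ≤ ω) (X V : ι → ℝ)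
    (Y W : ℝ) :
    ω * (∑ i, X i ^ 2 + Y ^ 2) + 2 * (ω * Y * (W - Y) + ∑ i, ω * X i * (V i - X i)) ≤
      ω * (∑ i, V i ^ 2 + W ^ 2) := by
  have key : ∀ p q : ℝ, ω * p ^ 2 + 2 * (ω * p * (q - p)) ≤ ω * q ^ 2 := fun p q => by
    nlinarith [mul_nonneg hω (sq_nonneg (q - p))]
  have hsum := Finset.sum_le_sum fun i (_ : i ∈ Finset.univ) => key (X i) (V i)
  rw [Finset.sum_add_distrib, ← Finset.mul_sum, ← Finset.mul_sum, ← Finset.mul_sum] at hsum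
  linarith [key Y W]

/-- The first variation of the energy at the extension: on a slab it reduces to boundary terms. -/
theorem integral_slab_csExt {ι : Type*} [Fintype ι] (e : OrthonormalBasis ι ℝ E) {s : ℝ}
    (hs : s ∈ Set.Ioo (0 : ℝ) 1) {v : E → ℝ → ℝ} (u : 𝓢(E, ℝ))
    (hv₁ : ContDiffOn ℝ 1 (fun p : E × ℝ => v p.1 p.2) {p : E × ℝ | 0 < p.2})
    (hfin : csEnergy s v ≠ ⊤) {C : ℝ≥0∞} (hC : C ≠ ⊤)
    (hφ : ∀ y, 0 < y → ∫⁻ x, ‖v x y - csExt s u x y‖ₑ ^ 2 ≤ C * ENNReal.ofReal (y ^ (2 * s)))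
    {a b : ℝ} (ha : 0 < a) (hab : a ≤ b) :
    ∫ p : ℝ × E, (csFlux s u p.2 p.1 * (deriv (v p.2) p.1 - p.1 ^ (2 * s - 1) * csFlux s u p.2 p.1) +
        ∑ i, p.1 ^ (1 - 2 * s) * csExt s (∂_{e i} u : 𝓢(E, ℝ)) p.2 p.1 *
          (fderiv ℝ (fun x => v x p.1) p.2 (e i) - csExt s (∂_{e i} u : 𝓢(E, ℝ)) p.2 p.1))
        ∂((volume.restrict (Set.Ioc a b)).prod volume) =
      (∫ x, csFlux s u x b * (v x b - csExt s u x b)) -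
        ∫ x, csFlux s u x a * (v x a - csExt s u x a) := by
  have hs0 := hs.1
  have hpos : ∀ t ∈ Set.Icc a b, 0 < t := fun t ht => ha.trans_le ht.1
  have hbdry : ∀ y, 0 < y →
      Integrable (fun x => csFlux s u x y * (v x y - csExt s u x y)) := fun y hy => by
    obtain ⟨A, hA, hflux⟩ := exists_lintegral_csFlux_sq_le u hs
    exact (memLp_two_of_lintegral_ne_top
      (measurable_csFlux_left s u.continuous.measurable y).aestronglyMeasurable
      (ne_top_of_le_ne_top hA (hflux y hy))).integrable_mul
      (memLp_two_of_lintegral_ne_top ((hv₁.continuous_left_halfSpace hy).aestronglyMeasurable.sub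
        (measurable_csExt_left s u.continuous.measurable y).aestronglyMeasurable)
      (ne_top_of_le_ne_top (ENNReal.mul_ne_top hC ENNReal.ofReal_ne_top) (hφ y hy)))
  refine integral_slab_eq_sub (volume : Measure E) (e := e) hab (G := csFlux s u)
    (φ := fun x t => v x t - csExt s u x t)
    (φ' := fun x t => deriv (v x) t - t ^ (2 * s - 1) * csFlux s u x t)
    (Z := fun i x t => t ^ (1 - 2 * s) * csExt s (∂_{e i} u : 𝓢(E, ℝ)) x t)
    (Z' := fun i x t => t ^ (1 - 2 * s) * csExt s (∂_{e i} (∂_{e i} u) : 𝓢(E, ℝ)) x t)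
    (φx := fun i x t => fderiv ℝ (fun x => v x t) x (e i) - csExt s (∂_{e i} u : 𝓢(E, ℝ)) x t)
    (fun x t ht => ?_) (fun x t ht => ?_) (fun i x t ht => ?_) (fun i x t ht => ?_)
    (memLp_slab_csFlux u hs ha) ?_ ?_
    (fun i => memLp_slab_rpow_mul _ ha (memLp_slab_csExt _ hs0 ha))
    (fun i => memLp_slab_rpow_mul _ ha (memLp_slab_csExt _ hs0 ha)) (fun i => ?_)
    (hbdry a ha) (hbdry b (ha.trans_le hab))
  · refine (hasDerivAt_csFlux e hs0 (hpos t ht) u x).congr_deriv ?_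
    rw [mul_neg, Finset.mul_sum]
  · exact (hv₁.hasDerivAt_snd x (hpos t ht)).differentiableAt.hasDerivAt.sub
      (hasDerivAt_csExt hs0 (hpos t ht) u.integrable x)
  · exact HasDerivAt.const_mul _
      (hasLineDerivAt_csExt (∂_{e i} u : 𝓢(E, ℝ)) hs0 (hpos t ht) x (e i))
  · exact ((hv₁.hasFDerivAt_fst x (hpos t ht)).differentiableAt.hasFDerivAt.hasLineDerivAt
      (e i)).sub (hasLineDerivAt_csExt u hs0 (hpos t ht) x (e i))
  · refine memLp_two_slab volume
      ((hv₁.continuousOn_left_halfSpace.aestronglyMeasurable_slab ha.le).sub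
      (measurable_csExt s u.continuous.measurable).aestronglyMeasurable)
      (C := C * ENNReal.ofReal (b ^ (2 * s))) (by finiteness) fun t ht => ?_
    have ht0 := ha.trans ht.1
    refine (hφ t ht0).trans ?_
    gcongr
    exact ht.2
  · exact (memLp_slab_deriv hv₁ hfin ha).sub
      (memLp_slab_rpow_mul _ ha (memLp_slab_csFlux u hs ha))
  · exact (memLp_slab_fderiv_apply hv₁ hfin ha e i).sub (memLp_slab_csExt _ hs0 ha)

/-- The squared gradient of the extension, in an orthonormal basis. -/
theorem sq_gradient_csExt {ι : Type*} [Fintype ι] (e : OrthonormalBasis ι ℝ E) {s y : ℝ}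
    (hs : 0 < s) (hy : 0 < y) (u : 𝓢(E, ℝ)) (x : E) :
    ‖fderiv ℝ (fun x' => csExt s u x' y) x‖ ^ 2 + (deriv (fun t => csExt s u x t) y) ^ 2 =
      ∑ i, csExt s (∂_{e i} u : 𝓢(E, ℝ)) x y ^ 2 + (y ^ (2 * s - 1) * csFlux s u x y) ^ 2 := by
  rw [← e.sum_apply_sq, (hasDerivAt_csExt hs hy u.integrable x).deriv]
  simp only [fderiv_csExt_apply u hs hy]

theorem lintegral_slab_csExt_le {ι : Type*} [Fintype ι] (e : OrthonormalBasis ι ℝ E) {s : ℝ}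
    (hs : s ∈ Set.Ioo (0 : ℝ) 1) {v : E → ℝ → ℝ} (u : 𝓢(E, ℝ))
    (hv₁ : ContDiffOn ℝ 1 (fun p : E × ℝ => v p.1 p.2) {p : E × ℝ | 0 < p.2})
    (hfin : csEnergy s v ≠ ⊤) {C : ℝ≥0∞} (hC : C ≠ ⊤)
    (hφ : ∀ y, 0 < y → ∫⁻ x, ‖v x y - csExt s u x y‖ₑ ^ 2 ≤ C * ENNReal.ofReal (y ^ (2 * s)))
    {a b : ℝ} (ha : 0 < a) (hab : a ≤ b) :
    ∫⁻ y in Set.Ioc a b, ∫⁻ x, ENNReal.ofReal (y ^ (1 - 2 * s) *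
        (∑ i, csExt s (∂_{e i} u : 𝓢(E, ℝ)) x y ^ 2 + (y ^ (2 * s - 1) * csFlux s u x y) ^ 2)) ≤
      csEnergy s v + ENNReal.ofReal (2 * |∫ x, csFlux s u x a * (v x a - csExt s u x a)| +
        2 * |∫ x, csFlux s u x b * (v x b - csExt s u x b)|) := by
  have hs0 := hs.1
  have mX := fun i => memLp_slab_csExt (a := a) (b := b) (∂_{e i} u : 𝓢(E, ℝ)) hs0 ha
  have mG := memLp_slab_csFlux (a := a) (b := b) u hs ha
  have mY := memLp_slab_rpow_mul (2 * s - 1) ha mG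
  have mVx := memLp_slab_fderiv_apply (b := b) hv₁ hfin ha e
  have mVy := memLp_slab_deriv (b := b) hv₁ hfin ha
  have hpos := ae_slab_fst_pos (E := E) (b := b) ha
  have iw := integrable_slab_sum_sq (s := s) (X := fun i => csExt s (∂_{e i} u : 𝓢(E, ℝ)))
    (Y := fun x t => t ^ (2 * s - 1) * csFlux s u x t) ha mX mY
  have iv := integrable_slab_sum_sq (s := s) (X := fun i x t => fderiv ℝ (fun x => v x t) x (e i))
    (Y := fun x t => deriv (v x) t) ha mVx mVy
  have iQ : Integrable (fun p : ℝ × E =>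
      csFlux s u p.2 p.1 * (deriv (v p.2) p.1 - p.1 ^ (2 * s - 1) * csFlux s u p.2 p.1) +
        ∑ i, p.1 ^ (1 - 2 * s) * csExt s (∂_{e i} u : 𝓢(E, ℝ)) p.2 p.1 *
          (fderiv ℝ (fun x => v x p.1) p.2 (e i) - csExt s (∂_{e i} u : 𝓢(E, ℝ)) p.2 p.1))
      ((volume.restrict (Set.Ioc a b)).prod volume) :=
    (mG.integrable_mul (mVy.sub mY)).add (integrable_finsetSum _ fun i _ =>
      (memLp_slab_rpow_mul (1 - 2 * s) ha (mX i)).integrable_mul ((mVx i).sub (mX i)))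
  have hle := integral_mono_ae (iw.add (iQ.const_mul 2)) iv (hpos.mono fun p hp => by
    have h1 : p.1 ^ (1 - 2 * s) * (p.1 ^ (2 * s - 1) * csFlux s u p.2 p.1) =
        csFlux s u p.2 p.1 := by
      rw [← mul_assoc, ← Real.rpow_add hp]; simp
    have h2 := weighted_sum_sq_add_le (by positivity : 0 ≤ p.1 ^ (1 - 2 * s))
      (fun i => csExt s (∂_{e i} u : 𝓢(E, ℝ)) p.2 p.1)
      (fun i => fderiv ℝ (fun x => v x p.1) p.2 (e i))
      (p.1 ^ (2 * s - 1) * csFlux s u p.2 p.1) (deriv (v p.2) p.1)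
    rw [h1] at h2
    exact h2)
  rw [integral_add' iw (iQ.const_mul 2), integral_const_mul,
    integral_slab_csExt e hs u hv₁ hfin hC hφ ha hab] at hle
  rw [← ofReal_integral_slab_sum_sq (X := fun i => csExt s (∂_{e i} u : 𝓢(E, ℝ)))
    (Y := fun x t => t ^ (2 * s - 1) * csFlux s u x t) ha mX mY]
  have henergy : ∫⁻ y in Set.Ioc a b, ∫⁻ x, ENNReal.ofReal (y ^ (1 - 2 * s) *
      (∑ i, fderiv ℝ (fun x => v x y) x (e i) ^ 2 + deriv (v x) y ^ 2)) ≤ csEnergy s v :=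
    lintegral_slab_le_csEnergy ha.le fun x y _ => by rw [e.sum_apply_sq]
  rw [← ofReal_integral_slab_sum_sq (X := fun i x t => fderiv ℝ (fun x => v x t) x (e i))
    (Y := fun x t => deriv (v x) t) ha mVx mVy] at henergy
  refine le_trans ?_ (add_le_add_left henergy _)
  rw [← ENNReal.ofReal_add (integral_nonneg_of_ae (hpos.mono fun p hp => by
    simp only [Pi.zero_apply]; positivity)) (by positivity)]
  refine ENNReal.ofReal_le_ofReal ?_
  have h1 := neg_abs_le (∫ x, csFlux s u x b * (v x b - csExt s u x b))
  have h2 := le_abs_self (∫ x, csFlux s u x a * (v x a - csExt s u x a))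
  linarith

theorem tendsto_boundary_term {s : ℝ} (hs : s ∈ Set.Ioo (0 : ℝ) 1) {v : E → ℝ → ℝ} (u : 𝓢(E, ℝ))
    (hv₁ : ContDiffOn ℝ 1 (fun p : E × ℝ => v p.1 p.2) {p : E × ℝ | 0 < p.2})
    {C : ℝ≥0∞} (hC : C ≠ ⊤)
    (hφ : ∀ y, 0 < y → ∫⁻ x, ‖v x y - csExt s u x y‖ₑ ^ 2 ≤ C * ENNReal.ofReal (y ^ (2 * s))) :
    Tendsto (fun y => ∫ x, csFlux s u x y * (v x y - csExt s u x y)) (𝓝[>] 0) (𝓝 0) ∧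
      Tendsto (fun y => ∫ x, csFlux s u x y * (v x y - csExt s u x y)) atTop (𝓝 0) := by
  have hs0 := hs.1
  have hCS : ∀ y, 0 < y → ‖∫ x, csFlux s u x y * (v x y - csExt s u x y)‖ₑ ^ 2 ≤
      (∫⁻ x, ‖csFlux s u x y‖ₑ ^ 2) * (C * ENNReal.ofReal (y ^ (2 * s))) := fun y hy => by
    refine (enorm_integral_mul_sq_le volume
      (measurable_csFlux_left s u.continuous.measurable y).aemeasurable
      ((hv₁.continuous_left_halfSpace hy).measurable.sub
        (measurable_csExt_left s u.continuous.measurable y)).aemeasurable).trans ?_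
    gcongr
    exact hφ y hy
  constructor
  · obtain ⟨A, hA, hflux⟩ := exists_lintegral_csFlux_sq_le u hs
    refine tendsto_zero_of_enorm_sq_le (g := fun y => y ^ (2 * s)) (ENNReal.mul_ne_top hA hC) ?_ ?_
    · filter_upwards [self_mem_nhdsWithin] with y hy
      rw [mul_assoc]
      exact (hCS y hy).trans (mul_le_mul_left (hflux y hy) _)
    · have h := (Real.continuousAt_rpow_const 0 (2 * s) (Or.inr (by positivity))).tendsto
      rw [Real.zero_rpow (by positivity)] at h
      exact h.mono_left nhdsWithin_le_nhds
  · obtain ⟨B, hBeq⟩ : ∃ B, B = ∫⁻ x, ‖u x‖ₑ ^ 2 := ⟨_, rfl⟩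
    have hB : B ≠ ⊤ := hBeq ▸ u.lintegral_sq_ne_top
    refine tendsto_zero_of_enorm_sq_le (g := fun y => y ^ (-(2 * s)))
      (C := ENNReal.ofReal ((2 * s + 2 * csExponent E s) ^ 2) * B * C) (by finiteness) ?_
      (tendsto_rpow_neg_atTop (by positivity))
    filter_upwards [eventually_gt_atTop 0] with y hy
    refine (hCS y hy).trans ((mul_le_mul_left (lintegral_csFlux_sq_le hs0 hy u.integrable
      u.continuous.measurable) _).trans_eq ?_)
    have h1 : y ^ (-(2 * s)) = y ^ (-(4 * s)) * y ^ (2 * s) := by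
      rw [← Real.rpow_add hy]; ring_nf
    rw [h1, ENNReal.ofReal_mul (by positivity), ENNReal.ofReal_mul (by positivity), ← hBeq]
    ring

theorem lintegral_Ioi_le_of_forall_Ioc {f : ℝ → ℝ≥0∞} (hf : Measurable f) {A : ℝ≥0∞} {r : ℝ → ℝ}
    (h₀ : Tendsto r (𝓝[>] 0) (𝓝 0)) (h₁ : Tendsto r atTop (𝓝 0))
    (h : ∀ a b, 0 < a → a ≤ b →
      ∫⁻ y in Set.Ioc a b, f y ≤ A + ENNReal.ofReal (2 * |r a| + 2 * |r b|)) :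
    ∫⁻ y in Set.Ioi 0, f y ≤ A := by
  have hb : Tendsto (fun k : ℕ => (k : ℝ) + 1) atTop atTop :=
    tendsto_atTop_add_const_right _ _ tendsto_natCast_atTop_atTop
  have ha : Tendsto (fun k : ℕ => ((k : ℝ) + 1)⁻¹) atTop (𝓝[>] 0) :=
    tendsto_inv_atTop_nhdsGT_zero.comp hb
  have hcover : AECover (volume.restrict (Set.Ioi (0 : ℝ))) atTop
      fun k : ℕ => Set.Ioc ((k : ℝ) + 1)⁻¹ ((k : ℝ) + 1) :=
    { ae_eventually_mem := by
        filter_upwards [ae_restrict_mem measurableSet_Ioi] with y hy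
        filter_upwards [hb.eventually_ge_atTop y,
          (ha.mono_right nhdsWithin_le_nhds).eventually_lt_const hy] with k h1 h2 using ⟨h2, h1⟩
      measurableSet := fun _ => measurableSet_Ioc }
  have hlim := hcover.lintegral_tendsto_of_nat hf.aemeasurable
  have hlim' : Tendsto (fun k : ℕ => A + ENNReal.ofReal
      (2 * |r ((k : ℝ) + 1)⁻¹| + 2 * |r ((k : ℝ) + 1)|)) atTop (𝓝 A) := by
    have h2 := ((h₀.comp ha).abs.const_mul 2).add ((h₁.comp hb).abs.const_mul 2)
    simpa using (ENNReal.tendsto_ofReal h2).const_add A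
  refine le_of_tendsto_of_tendsto' hlim hlim' fun k => ?_
  have hk : (1 : ℝ) ≤ (k : ℝ) + 1 := by simp
  refine le_trans ?_ (h _ _ (by positivity) ((inv_le_one_of_one_le₀ hk).trans hk))
  rw [Measure.restrict_restrict measurableSet_Ioc]
  exact lintegral_mono_set Set.inter_subset_left

/-- The extension minimizes the weighted Dirichlet energy among competitors with its trace. -/
theorem csEnergy_csExt_le {s : ℝ} (hs : s ∈ Set.Ioo (0 : ℝ) 1) (u : 𝓢(E, ℝ)) {v : E → ℝ → ℝ}
    (hv₁ : ContDiffOn ℝ 1 (fun p : E × ℝ => v p.1 p.2) {p : E × ℝ | 0 < p.2})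
    (hv₂ : ContinuousOn (fun p : E × ℝ => v p.1 p.2) {p : E × ℝ | 0 ≤ p.2})
    (hv₃ : ∀ x, v x 0 = u x) (hfin : csEnergy s v ≠ ⊤) :
    csEnergy s (csExt s u) ≤ csEnergy s v := by
  obtain ⟨C, hC, hφ⟩ := exists_lintegral_sub_csExt_sq_le hs u hv₁ hv₂ hv₃ hfin
  obtain ⟨h₀, h₁⟩ := tendsto_boundary_term hs u hv₁ hC hφ
  let e := stdOrthonormalBasis ℝ E
  have hmeas : Measurable fun p : ℝ × E => ENNReal.ofReal (p.1 ^ (1 - 2 * s) *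
      (∑ i, csExt s (∂_{e i} u : 𝓢(E, ℝ)) p.2 p.1 ^ 2 +
        (p.1 ^ (2 * s - 1) * csFlux s u p.2 p.1) ^ 2)) := by
    have h1 := fun i => measurable_csExt s (∂_{e i} u : 𝓢(E, ℝ)).continuous.measurable
    have h2 := measurable_csFlux s u.continuous.measurable
    fun_prop
  refine le_trans (le_of_eq ?_) (lintegral_Ioi_le_of_forall_Ioc hmeas.lintegral_prod_right' h₀ h₁
    fun a b ha hab => lintegral_slab_csExt_le e hs u hv₁ hfin hC hφ ha hab)
  refine setLIntegral_congr_fun measurableSet_Ioi fun y hy => lintegral_congr fun x => ?_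
  rw [sq_gradient_csExt e hs.1 hy]

theorem csExt_eq {s : ℝ} (f : E → ℝ) (x : E) (y : ℝ) :
    csExt s f x y =
      (1 / ∫ z : E, (‖z‖ ^ 2 + 1) ^ (-((Module.finrank ℝ E : ℝ) + 2 * s) / 2)) *
        ∫ ξ : E, y ^ (2 * s) * f ξ *
          (‖x - ξ‖ ^ 2 + y ^ 2) ^ (-((Module.finrank ℝ E : ℝ) + 2 * s) / 2) := by
  rw [csExt, csMass, bracketConv, csExponent, one_div, ← integral_const_mul, neg_div]
  congr 2 with ξ
  ring

end Minimality

/-- The normalized Caffarelli–Silvestre extension minimizes the weighted Dirichlet energy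
`ℰ_s(v) = ∫₀^∞ ∫ y^{1-2s}|∇v|² dx dy` among all `C¹` extensions of `u` to the half-space
that are continuous up to `y = 0` with trace `u` and have finite energy. Here
`|∇v|² = ‖∇ₓv‖² + (∂_y v)²` is the square of the full gradient in `(x,y)`. -/
theorem stmt15 {n : ℕ} (hn : 1 ≤ n) (s : ℝ) (hs : s ∈ Set.Ioo (0 : ℝ) 1)
    (u : SchwartzMap (EuclideanSpace ℝ (Fin n)) ℝ)
    (w : EuclideanSpace ℝ (Fin n) → ℝ → ℝ)
    (hw : ∀ (x : EuclideanSpace ℝ (Fin n)) (y : ℝ),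
      w x y = (1 / ∫ z : EuclideanSpace ℝ (Fin n), (‖z‖ ^ 2 + 1) ^ (-((n : ℝ) + 2 * s) / 2)) *
        ∫ ξ : EuclideanSpace ℝ (Fin n),
          y ^ (2 * s) * u ξ * (‖x - ξ‖ ^ 2 + y ^ 2) ^ (-((n : ℝ) + 2 * s) / 2))
    (v : EuclideanSpace ℝ (Fin n) → ℝ → ℝ)
    (hv₁ : ContDiffOn ℝ 1 (fun p : EuclideanSpace ℝ (Fin n) × ℝ => v p.1 p.2)
      {p : EuclideanSpace ℝ (Fin n) × ℝ | 0 < p.2})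
    (hv₂ : ContinuousOn (fun p : EuclideanSpace ℝ (Fin n) × ℝ => v p.1 p.2)
      {p : EuclideanSpace ℝ (Fin n) × ℝ | 0 ≤ p.2})
    (hv₃ : ∀ x : EuclideanSpace ℝ (Fin n), v x 0 = u x)
    (hfin : (∫⁻ y in Set.Ioi (0 : ℝ), ∫⁻ x : EuclideanSpace ℝ (Fin n),
        ENNReal.ofReal (y ^ (1 - 2 * s) *
          (‖fderiv ℝ (fun x' => v x' y) x‖ ^ 2 + (deriv (fun t => v x t) y) ^ 2))) ≠ ⊤) :
    (∫⁻ y in Set.Ioi (0 : ℝ), ∫⁻ x : EuclideanSpace ℝ (Fin n),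
        ENNReal.ofReal (y ^ (1 - 2 * s) *
          (‖fderiv ℝ (fun x' => w x' y) x‖ ^ 2 + (deriv (fun t => w x t) y) ^ 2)))
      ≤
    ∫⁻ y in Set.Ioi (0 : ℝ), ∫⁻ x : EuclideanSpace ℝ (Fin n),
        ENNReal.ofReal (y ^ (1 - 2 * s) *
          (‖fderiv ℝ (fun x' => v x' y) x‖ ^ 2 + (deriv (fun t => v x t) y) ^ 2)) := by
  have hww : w = csExt s u := by
    funext x y
    rw [hw, csExt_eq, finrank_euclideanSpace_fin]
  subst hww
  exact csEnergy_csExt_le hs u hv₁ hv₂ hv₃ hfin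
end

section
/- Let n ≥ 1 and s ∈ (0,1). Let Ω ⊂ ℝⁿ be a bounded open set, and let u : ℝⁿ → ℝ be a smooth function with compact support contained in Ω, u not identically 0. Let w_u(x,y) = ∫_{ℝⁿ} y^{2s} u(ξ)(|x-ξ|²+y²)^{-(n+2s)/2} dξ be its Caffarelli–Silvestre extension. Then ∫₀^∞ ∫_{ℝⁿ \setminus Ω} y^{1-2s} |∇w_u(x,y)|² dx dy > 0; consequently the energy of w_u over the half-cylinder Ω × (0,∞) is strictly smaller than its energy over the full half-space ℝⁿ × (0,∞). -/
open MeasureTheory Real Filter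
open scoped ENNReal

theorem continuous_norm_sub_sq_add_rpow {E : Type*} [NormedAddCommGroup E] (x : E)
    {t : ℝ} (ht : 0 < t) (γ : ℝ) :
    Continuous fun ξ : E => (‖x - ξ‖ ^ 2 + t) ^ γ :=
  Continuous.rpow_const (by fun_prop) fun ξ => Or.inl (by positivity)

theorem exists_norm_sub_sq_le {E : Type*} [NormedAddCommGroup E] {u : E → ℝ}
    (hc : HasCompactSupport u) (x : E) :
    ∃ M, 0 ≤ M ∧ ∀ ξ, u ξ ≠ 0 → ‖x - ξ‖ ^ 2 ≤ M := by
  obtain ⟨C, hC⟩ := hc.isCompact.exists_bound_of_continuousOn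
    (f := fun ξ : E => ‖x - ξ‖ ^ 2) (by fun_prop)
  refine ⟨|C|, abs_nonneg C, fun ξ hξ => ?_⟩
  have := hC ξ (subset_tsupport u hξ)
  exact (le_abs_self _).trans (this.trans (le_abs_self _))

section Uniqueness

variable {E : Type*} [NormedAddCommGroup E] [InnerProductSpace ℝ E] [FiniteDimensional ℝ E]
  [MeasurableSpace E] [BorelSpace E]

/-- The potential `∫ u(ξ) (‖x - ξ‖² + t)^(-β) dξ`, with `t` in the role of `y²`. -/
noncomputable def shiftedRiesz (u : E → ℝ) (β : ℝ) (x : E) (t : ℝ) : ℝ :=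
  ∫ ξ, u ξ * (‖x - ξ‖ ^ 2 + t) ^ (-β)

theorem integrable_shiftedRiesz {u : E → ℝ} (hu : Continuous u) (hc : HasCompactSupport u)
    (β : ℝ) (x : E) {t : ℝ} (ht : 0 < t) :
    Integrable fun ξ => u ξ * (‖x - ξ‖ ^ 2 + t) ^ (-β) :=
  (hu.mul (continuous_norm_sub_sq_add_rpow x ht _)).integrable_of_hasCompactSupport hc.mul_right

theorem hasDerivAt_shiftedRiesz {u : E → ℝ} (hu : Continuous u) (hc : HasCompactSupport u)
    {β : ℝ} (hβ : 0 < β) (x : E) {t : ℝ} (ht : 0 < t) :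
    HasDerivAt (shiftedRiesz u β x) (-β * shiftedRiesz u (β + 1) x t) t := by
  have key := hasDerivAt_integral_of_dominated_loc_of_deriv_le (μ := (volume : Measure E))
    (F := fun t ξ => u ξ * (‖x - ξ‖ ^ 2 + t) ^ (-β))
    (F' := fun t ξ => -β * (u ξ * (‖x - ξ‖ ^ 2 + t) ^ (-(β + 1))))
    (bound := fun ξ => β * (t / 2) ^ (-(β + 1)) * |u ξ|) (x₀ := t) (s := Set.Ioi (t / 2))
    (Ioi_mem_nhds (by linarith)) ?_ (integrable_shiftedRiesz hu hc β x ht)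
    ((integrable_shiftedRiesz hu hc (β + 1) x ht).const_mul (-β)).aestronglyMeasurable ?_
    ((hu.integrable_of_hasCompactSupport hc).abs.const_mul _) ?_
  · have := key.2
    rw [integral_const_mul] at this
    exact this
  · filter_upwards [Ioi_mem_nhds ht] with r hr
    exact (integrable_shiftedRiesz hu hc β x hr).aestronglyMeasurable
  · refine Eventually.of_forall fun ξ r hr => ?_
    have hr : t / 2 < r := hr
    have h1 : (‖x - ξ‖ ^ 2 + r) ^ (-(β + 1)) ≤ (t / 2) ^ (-(β + 1)) :=
      Real.rpow_le_rpow_of_nonpos (by positivity) (by nlinarith [sq_nonneg ‖x - ξ‖])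
        (by linarith)
    have h2 : 0 ≤ (‖x - ξ‖ ^ 2 + r) ^ (-(β + 1)) :=
      Real.rpow_nonneg (by nlinarith [sq_nonneg ‖x - ξ‖]) _
    rw [Real.norm_eq_abs, abs_mul, abs_mul, abs_neg, abs_of_pos hβ, abs_of_nonneg h2]
    have := mul_le_mul_of_nonneg_left h1 (mul_nonneg hβ.le (abs_nonneg (u ξ)))
    linarith
  · refine Eventually.of_forall fun ξ r hr => ?_
    have hr : t / 2 < r := hr
    have h0 : ‖x - ξ‖ ^ 2 + r ≠ 0 := by nlinarith [sq_nonneg ‖x - ξ‖]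
    have h1 := (((hasDerivAt_id r).const_add (‖x - ξ‖ ^ 2)).rpow_const (p := -β)
      (Or.inl h0)).const_mul (u ξ)
    refine h1.congr_deriv ?_
    rw [show -(β + 1) = -β - 1 by ring]
    simp only [id]
    ring

theorem continuousOn_shiftedRiesz {u : E → ℝ} (hu : Continuous u) (hc : HasCompactSupport u)
    (β : ℝ) :
    ContinuousOn (fun p : E × ℝ => shiftedRiesz u β p.1 p.2) (Set.univ ×ˢ Set.Ioi 0) := by
  refine continuousOn_integral_of_compact_support (k := tsupport u) hc ?_ ?_
  · refine ContinuousOn.mul (by fun_prop) (ContinuousOn.rpow_const (by fun_prop) ?_)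
    rintro ⟨⟨x, t⟩, ξ⟩ h
    have ht : 0 < t := h.1.2
    exact Or.inl (by positivity)
  · intro p ξ _ hξ
    simp [image_eq_zero_of_notMem_tsupport hξ]

theorem shiftedRiesz_add_nat_eq_zero {u : E → ℝ} (hu : Continuous u) (hc : HasCompactSupport u)
    {β : ℝ} (hβ : 0 < β) {x : E} (h : ∀ t > 0, shiftedRiesz u β x t = 0) (k : ℕ) :
    ∀ t > 0, shiftedRiesz u (β + k) x t = 0 := by
  induction k with
  | zero => simpa using h
  | succ k ih =>
    intro t ht
    have hβk : 0 < β + k := by positivity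
    have h1 := hasDerivAt_shiftedRiesz hu hc hβk x ht
    have h2 : HasDerivAt (shiftedRiesz u (β + k) x) 0 t := by
      refine (hasDerivAt_const t (0 : ℝ)).congr_of_eventuallyEq ?_
      filter_upwards [Ioi_mem_nhds ht] with r hr using ih r hr
    have h3 := h1.unique h2
    push_cast
    rw [← add_assoc]
    rcases mul_eq_zero.1 h3 with h | h
    · linarith
    · exact h

/-- Vanishing of the moments of `v` along `g` forces the vanishing of every continuous average. -/
theorem integral_mul_comp_eq_zero_of_moments {v g : E → ℝ} (hv : Continuous v)
    (hc : HasCompactSupport v) (hg : Continuous g) (h : ∀ k : ℕ, ∫ ξ, v ξ * g ξ ^ k = 0)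
    {a b : ℝ} (hab : ∀ ξ, v ξ ≠ 0 → g ξ ∈ Set.Icc a b) {φ : ℝ → ℝ}
    (hφ : ContinuousOn φ (Set.Icc a b)) (hint : Integrable fun ξ => v ξ * φ (g ξ)) :
    ∫ ξ, v ξ * φ (g ξ) = 0 := by
  have hI : Integrable fun ξ => |v ξ| := (hv.integrable_of_hasCompactSupport hc).abs
  have hpoly (p : Polynomial ℝ) : Integrable (fun ξ => v ξ * p.eval (g ξ)) :=
    (hv.mul (p.continuous.comp hg)).integrable_of_hasCompactSupport hc.mul_right
  have hzero (p : Polynomial ℝ) : ∫ ξ, v ξ * p.eval (g ξ) = 0 := by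
    simp_rw [Polynomial.eval_eq_sum_range, Finset.mul_sum]
    rw [integral_finsetSum]
    · refine Finset.sum_eq_zero fun i _ => ?_
      simp_rw [mul_left_comm (v _)]
      rw [integral_const_mul, h, mul_zero]
    · intro i _
      exact Continuous.integrable_of_hasCompactSupport (by fun_prop) hc.mul_right
  have hle : ∀ ε > 0, |∫ ξ, v ξ * φ (g ξ)| ≤ ε * ∫ ξ, |v ξ| := by
    intro ε hε
    obtain ⟨p, hp⟩ := exists_polynomial_near_of_continuousOn a b φ hφ ε hε
    rw [← sub_zero (∫ ξ, v ξ * φ (g ξ)), ← hzero p, ← integral_sub hint (hpoly p),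
      ← integral_const_mul]
    refine (abs_integral_le_integral_abs).trans
      (integral_mono (hint.sub (hpoly p)).abs (hI.const_mul ε) fun ξ => ?_)
    by_cases h0 : v ξ = 0
    · simp [h0]
    · have := (hp _ (hab ξ h0)).le
      simp only [← mul_sub, abs_mul]
      rw [abs_sub_comm, mul_comm]
      gcongr
  have hN : 0 ≤ ∫ ξ, |v ξ| := integral_nonneg fun _ => abs_nonneg _
  have : |∫ ξ, v ξ * φ (g ξ)| ≤ 0 := by
    refine le_of_forall_pos_le_add fun δ hδ => ?_
    have h1 : 0 < (∫ ξ, |v ξ|) + 1 := by linarith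
    refine (hle (δ / ((∫ ξ, |v ξ|) + 1)) (by positivity)).trans ?_
    rw [div_mul_eq_mul_div, div_le_iff₀ h1]
    nlinarith
  exact abs_eq_zero.1 (le_antisymm this (abs_nonneg _))

theorem moments_eq_zero_of_shiftedRiesz_eq_zero {u : E → ℝ} (hu : Continuous u)
    (hc : HasCompactSupport u) {β : ℝ} (hβ : 0 < β) {x : E}
    (h : ∀ t > 0, shiftedRiesz u β x t = 0) (k : ℕ) :
    ∫ ξ, u ξ * (‖x - ξ‖ ^ 2) ^ k = 0 := by
  obtain ⟨M, hM0, hM⟩ := exists_norm_sub_sq_le hc x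
  have hpos (ξ : E) : 0 < ‖x - ξ‖ ^ 2 + 1 := by positivity
  have heq (ξ : E) : u ξ * (‖x - ξ‖ ^ 2 + 1) ^ (-β) *
      ((((‖x - ξ‖ ^ 2 + 1)⁻¹)⁻¹ - 1) ^ k * ((‖x - ξ‖ ^ 2 + 1)⁻¹) ^ (-β)) =
      u ξ * (‖x - ξ‖ ^ 2) ^ k := by
    rw [inv_inv, add_sub_cancel_right, Real.inv_rpow (hpos ξ).le]
    have := (Real.rpow_pos_of_pos (hpos ξ) (-β)).ne'
    field_simp
  have hv : Continuous fun ξ => u ξ * (‖x - ξ‖ ^ 2 + 1) ^ (-β) :=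
    hu.mul (continuous_norm_sub_sq_add_rpow x one_pos _)
  have hg : Continuous fun ξ => (‖x - ξ‖ ^ 2 + 1)⁻¹ :=
    Continuous.inv₀ (by fun_prop) fun ξ => (hpos ξ).ne'
  have hmom (j : ℕ) :
      ∫ ξ, u ξ * (‖x - ξ‖ ^ 2 + 1) ^ (-β) * ((‖x - ξ‖ ^ 2 + 1)⁻¹) ^ j = 0 := by
    rw [← shiftedRiesz_add_nat_eq_zero hu hc hβ h j 1 one_pos, shiftedRiesz]
    congr 1 with ξ
    rw [neg_add, Real.rpow_add (hpos ξ), Real.rpow_neg (hpos ξ).le (j : ℝ), Real.rpow_natCast,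
      inv_pow, mul_assoc]
  have hab (ξ : E) (hξ : u ξ * (‖x - ξ‖ ^ 2 + 1) ^ (-β) ≠ 0) :
      (‖x - ξ‖ ^ 2 + 1)⁻¹ ∈ Set.Icc (M + 1)⁻¹ 1 := by
    have := hM ξ (left_ne_zero_of_mul hξ)
    exact ⟨by gcongr, inv_le_one_of_one_le₀ (by nlinarith [sq_nonneg ‖x - ξ‖])⟩
  have hφ : ContinuousOn (fun τ : ℝ => (τ⁻¹ - 1) ^ k * τ ^ (-β)) (Set.Icc (M + 1)⁻¹ 1) := by
    have h0 : ∀ τ ∈ Set.Icc (M + 1)⁻¹ 1, τ ≠ 0 := fun τ hτ =>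
      (lt_of_lt_of_le (by positivity) hτ.1).ne'
    exact (((continuousOn_id.inv₀ h0).sub continuousOn_const).pow k).mul
      (continuousOn_id.rpow_const fun τ hτ => Or.inl (h0 τ hτ))
  have hint : Integrable fun ξ => u ξ * (‖x - ξ‖ ^ 2) ^ k :=
    Continuous.integrable_of_hasCompactSupport (by fun_prop) hc.mul_right
  have := integral_mul_comp_eq_zero_of_moments hv hc.mul_right hg hmom hab hφ
    (by simpa only [heq] using hint)
  simpa only [heq] using this

/-- The moments are polynomial along lines, so their vanishing far out propagates everywhere. -/
theorem moments_eq_zero_of_eq_zero_far {u : E → ℝ} (hu : Continuous u) (hc : HasCompactSupport u)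
    [Nontrivial E] (k : ℕ) {R : ℝ} (h : ∀ x : E, R < ‖x‖ → ∫ ξ, u ξ * (‖x - ξ‖ ^ 2) ^ k = 0)
    (x : E) : ∫ ξ, u ξ * (‖x - ξ‖ ^ 2) ^ k = 0 := by
  obtain ⟨e, he⟩ := exists_norm_eq E zero_le_one
  let a : C(E, ℝ) := ⟨fun ξ => ‖x - ξ‖ ^ 2, by fun_prop⟩
  let b : C(E, ℝ) := ⟨fun ξ => 2 * inner ℝ (x - ξ) e, by fun_prop⟩
  let Q : Polynomial C(E, ℝ) :=
    (Polynomial.C a + Polynomial.C b * Polynomial.X + Polynomial.X ^ 2) ^ k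
  let P : Polynomial ℝ := ∑ i ∈ Finset.range (Q.natDegree + 1),
    Polynomial.C (∫ ξ, u ξ * Q.coeff i ξ) * Polynomial.X ^ i
  have hP (τ : ℝ) : P.eval τ = ∫ ξ, u ξ * (‖x + τ • e - ξ‖ ^ 2) ^ k := by
    have hQ (ξ : E) : (‖x + τ • e - ξ‖ ^ 2) ^ k =
        ∑ i ∈ Finset.range (Q.natDegree + 1), Q.coeff i ξ * τ ^ i := by
      have h1 := congrArg (fun f : C(E, ℝ) => f ξ)
        (Polynomial.eval_eq_sum_range (p := Q) (ContinuousMap.const E τ))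
      simp only [ContinuousMap.coe_sum, Finset.sum_apply, ContinuousMap.mul_apply,
        ContinuousMap.pow_apply, ContinuousMap.const_apply] at h1
      rw [← h1]
      simp only [Q, a, b, Polynomial.eval_pow, Polynomial.eval_add, Polynomial.eval_mul,
        Polynomial.eval_C, Polynomial.eval_X, ContinuousMap.pow_apply, ContinuousMap.add_apply,
        ContinuousMap.mul_apply, ContinuousMap.const_apply, ContinuousMap.coe_mk]
      rw [show x + τ • e - ξ = (x - ξ) + τ • e by abel, norm_add_sq_real, norm_smul, he,
        inner_smul_right, mul_one, Real.norm_eq_abs, sq_abs]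
      ring
    simp_rw [hQ, Finset.mul_sum]
    rw [integral_finsetSum]
    · simp only [P, Polynomial.eval_finsetSum, Polynomial.eval_mul, Polynomial.eval_C,
        Polynomial.eval_pow, Polynomial.eval_X]
      refine Finset.sum_congr rfl fun i _ => ?_
      simp_rw [← mul_assoc]
      rw [integral_mul_const]
    · intro i _
      exact Continuous.integrable_of_hasCompactSupport (by fun_prop) hc.mul_right
  have hP0 : P = 0 := by
    refine Polynomial.eq_zero_of_infinite_isRoot P ((Set.Ioi_infinite (R + ‖x‖)).mono ?_)
    intro τ hτ
    have hτ : R + ‖x‖ < τ := hτ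
    refine (hP τ).trans (h _ ?_)
    have h1 : ‖τ • e‖ ≤ ‖x + τ • e‖ + ‖x‖ := by
      simpa using norm_sub_le (x + τ • e) x
    rw [norm_smul, he, mul_one, Real.norm_eq_abs] at h1
    linarith [le_abs_self τ]
  have := hP 0
  rw [hP0] at this
  simpa using this.symm

theorem eq_zero_of_moments_eq_zero {u : E → ℝ} (hu : Continuous u) (hc : HasCompactSupport u)
    (h : ∀ (k : ℕ) (x : E), ∫ ξ, u ξ * (‖x - ξ‖ ^ 2) ^ k = 0) : u = 0 := by
  by_contra hne
  obtain ⟨x, hx⟩ := Function.ne_iff.1 hne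
  have hx : u x ≠ 0 := hx
  have hxx : 0 < u x * u x := mul_self_pos.2 hx
  obtain ⟨δ, hδ, hball⟩ := Metric.eventually_nhds_iff.1
    ((hu.const_mul (u x)).continuousAt.eventually (lt_mem_nhds hxx))
  obtain ⟨M, hM0, hM⟩ := exists_norm_sub_sq_le hc x
  have hcont : Continuous fun ξ => u ξ * max 0 (δ ^ 2 - ‖x - ξ‖ ^ 2) := by fun_prop
  have hz := integral_mul_comp_eq_zero_of_moments (g := fun ξ => ‖x - ξ‖ ^ 2) hu hc
    (by fun_prop) (fun k => h k x) (a := 0) (b := M) (fun ξ hξ => ⟨by positivity, hM ξ hξ⟩)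
    (φ := fun r => max 0 (δ ^ 2 - r)) (by fun_prop)
    (hcont.integrable_of_hasCompactSupport hc.mul_right)
  have hpos := Continuous.integral_pos_of_hasCompactSupport_nonneg_nonzero
    (μ := (volume : Measure E)) (f := fun ξ => u x * (u ξ * max 0 (δ ^ 2 - ‖x - ξ‖ ^ 2)))
    (x := x) (by fun_prop) (hc.mul_right.mul_left) ?_ ?_
  · rw [integral_const_mul, hz, mul_zero] at hpos
    exact hpos.false
  · intro ξ
    simp only [Pi.zero_apply]
    rw [← mul_assoc]
    rcases lt_or_ge (dist ξ x) δ with hlt | hge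
    · exact mul_nonneg (hball hlt).le (le_max_left _ _)
    · rw [dist_comm, dist_eq_norm] at hge
      rw [max_eq_left (by nlinarith), mul_zero]
  · have : 0 < δ ^ 2 := by positivity
    simp [hx, hδ.ne']

theorem eq_zero_of_shiftedRiesz_eq_zero_far [Nontrivial E] {u : E → ℝ} (hu : Continuous u)
    (hc : HasCompactSupport u) {β : ℝ} (hβ : 0 < β) {R : ℝ}
    (h : ∀ x : E, R < ‖x‖ → ∀ t > 0, shiftedRiesz u β x t = 0) : u = 0 :=
  eq_zero_of_moments_eq_zero hu hc fun k => moments_eq_zero_of_eq_zero_far hu hc k fun x hx =>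
    moments_eq_zero_of_shiftedRiesz_eq_zero hu hc hβ (h x hx) k

end Uniqueness

section Energy

variable {E : Type*} [NormedAddCommGroup E] [InnerProductSpace ℝ E] [FiniteDimensional ℝ E]
  [MeasurableSpace E] [BorelSpace E]

/-- The Caffarelli–Silvestre extension of `u` (up to the normalising constant). -/
noncomputable def csExtension (s : ℝ) (u : E → ℝ) (x : E) (y : ℝ) : ℝ :=
  ∫ ξ, y ^ (2 * s) * u ξ *
    (‖x - ξ‖ ^ 2 + y ^ 2) ^ (-((Module.finrank ℝ E : ℝ) + 2 * s) / 2)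

theorem csExtension_eq_shiftedRiesz (s : ℝ) (u : E → ℝ) (x : E) (y : ℝ) :
    csExtension s u x y =
      y ^ (2 * s) * shiftedRiesz u (((Module.finrank ℝ E : ℝ) + 2 * s) / 2) x (y ^ 2) := by
  rw [csExtension, shiftedRiesz, ← integral_const_mul]
  simp_rw [mul_assoc, neg_div]

theorem csExtension_eq_convolution (s : ℝ) (u : E → ℝ) (x : E) (y : ℝ) :
    csExtension s u x y = ∫ z, y ^ (2 * s) * u (x - z) *
      (‖z‖ ^ 2 + y ^ 2) ^ (-((Module.finrank ℝ E : ℝ) + 2 * s) / 2) := by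
  rw [csExtension, ← integral_sub_left_eq_self _ volume x]
  simp only [sub_sub_cancel]

theorem csExtension_eq_rescaled (s : ℝ) (u : E → ℝ) (x : E) {y : ℝ} (hy : 0 < y) :
    csExtension s u x y = ∫ η : E, u (x - y • η) *
      (1 + ‖η‖ ^ 2) ^ (-((Module.finrank ℝ E : ℝ) + 2 * s) / 2) := by
  have h := Measure.integral_comp_smul (volume : Measure E) (fun z => y ^ (2 * s) * u (x - z) *
    (‖z‖ ^ 2 + y ^ 2) ^ (-((Module.finrank ℝ E : ℝ) + 2 * s) / 2)) y
  rw [← csExtension_eq_convolution, abs_of_pos (by positivity), smul_eq_mul,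
    eq_inv_mul_iff_mul_eq₀ (by positivity)] at h
  rw [← h, ← integral_const_mul]
  congr 1 with η
  have h1 : ‖y • η‖ ^ 2 + y ^ 2 = y ^ 2 * (1 + ‖η‖ ^ 2) := by
    rw [norm_smul, mul_pow, Real.norm_eq_abs, sq_abs]
    ring
  rw [h1, Real.mul_rpow (by positivity) (by positivity), ← Real.rpow_natCast y 2,
    ← Real.rpow_natCast y (Module.finrank ℝ E), ← Real.rpow_mul hy.le]
  have h2 : y ^ (Module.finrank ℝ E : ℝ) * y ^ (2 * s) *
      y ^ (((2 : ℕ) : ℝ) * (-((Module.finrank ℝ E : ℝ) + 2 * s) / 2)) = 1 := by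
    rw [← Real.rpow_add hy, ← Real.rpow_add hy]
    convert Real.rpow_zero y using 2
    push_cast
    ring
  linear_combination (u (x - y • η) *
    (1 + ‖η‖ ^ 2) ^ (-((Module.finrank ℝ E : ℝ) + 2 * s) / 2)) * h2

theorem integrable_norm_rpow_mul_poisson {s a : ℝ} (ha0 : 0 ≤ a) (ha : a < 2 * s) :
    Integrable fun η : E =>
      ‖η‖ ^ a * (1 + ‖η‖ ^ 2) ^ (-((Module.finrank ℝ E : ℝ) + 2 * s) / 2) := by
  have hI := integrable_rpow_neg_one_add_norm_sq (E := E) (μ := volume)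
    (r := (Module.finrank ℝ E : ℝ) + (2 * s - a)) (by linarith)
  refine hI.mono ?_ (Eventually.of_forall fun η => ?_)
  · refine Continuous.aestronglyMeasurable (Continuous.mul ?_ ?_)
    · exact Continuous.rpow_const (by fun_prop) fun _ => Or.inr ha0
    · exact Continuous.rpow_const (by fun_prop) fun _ => Or.inl (by positivity)
  · have h1 : 0 < 1 + ‖η‖ ^ 2 := by positivity
    rw [Real.norm_of_nonneg (by positivity), Real.norm_of_nonneg (by positivity)]
    have h2 : ‖η‖ ^ a ≤ (1 + ‖η‖ ^ 2) ^ (a / 2) := by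
      have : ‖η‖ ^ a = (‖η‖ ^ 2) ^ (a / 2) := by
        rw [← Real.rpow_natCast ‖η‖ 2, ← Real.rpow_mul (norm_nonneg η)]
        congr 1
        push_cast
        ring
      rw [this]
      exact Real.rpow_le_rpow (by positivity) (by linarith) (by positivity)
    calc _ ≤ (1 + ‖η‖ ^ 2) ^ (a / 2) *
          (1 + ‖η‖ ^ 2) ^ (-((Module.finrank ℝ E : ℝ) + 2 * s) / 2) := by gcongr
      _ = _ := by
        rw [← Real.rpow_add h1]
        congr 1
        ring

theorem integrable_poisson {s : ℝ} (hs : 0 < s) :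
    Integrable fun η : E => (1 + ‖η‖ ^ 2) ^ (-((Module.finrank ℝ E : ℝ) + 2 * s) / 2) := by
  simpa using integrable_norm_rpow_mul_poisson (E := E) (s := s) (a := 0) le_rfl (by linarith)

theorem integrable_rescaled {s : ℝ} (hs : 0 < s) {u : E → ℝ} (hu : Continuous u)
    (hc : HasCompactSupport u) (x : E) (y : ℝ) :
    Integrable fun η : E =>
      u (x - y • η) * (1 + ‖η‖ ^ 2) ^ (-((Module.finrank ℝ E : ℝ) + 2 * s) / 2) := by
  obtain ⟨C, hC⟩ := hc.exists_bound_of_continuous hu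
  exact (integrable_poisson hs).bdd_mul
    (Continuous.aestronglyMeasurable (by fun_prop)) (Eventually.of_forall fun η => hC _)

theorem norm_fderiv_csExtension_le {s : ℝ} (hs : 0 < s) {u : E → ℝ} {L : NNReal}
    (hu : LipschitzWith L u) (hc : HasCompactSupport u) (x : E) {y : ℝ} (hy : 0 < y) :
    ‖fderiv ℝ (fun x' => csExtension s u x' y) x‖ ≤
      L * ∫ η : E, (1 + ‖η‖ ^ 2) ^ (-((Module.finrank ℝ E : ℝ) + 2 * s) / 2) := by
  have hP : 0 ≤ ∫ η : E, (1 + ‖η‖ ^ 2) ^ (-((Module.finrank ℝ E : ℝ) + 2 * s) / 2) :=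
    integral_nonneg fun η => by positivity
  refine norm_fderiv_le_of_lip' ℝ (by positivity) (Eventually.of_forall fun x' => ?_)
  rw [csExtension_eq_rescaled s u x' hy, csExtension_eq_rescaled s u x hy,
    ← integral_sub (integrable_rescaled hs hu.continuous hc x' y)
      (integrable_rescaled hs hu.continuous hc x y), mul_right_comm, ← integral_const_mul]
  refine norm_integral_le_of_norm_le ((integrable_poisson hs).const_mul _)
    (Eventually.of_forall fun η => ?_)
  rw [← sub_mul, norm_mul, Real.norm_of_nonneg (by positivity : 0 ≤ (1 + ‖η‖ ^ 2) ^ (_ : ℝ))]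
  gcongr
  simpa [dist_eq_norm] using hu.dist_le_mul (x' - y • η) (x - y • η)

theorem norm_fderiv_csExtension_le_of_mem_ball {s : ℝ} (hs : 0 < s) {u : E → ℝ} {L : NNReal}
    (hu : LipschitzWith L u) (hc : HasCompactSupport u) {R : ℝ}
    (huR : ∀ ξ, R ≤ ‖ξ‖ → u ξ = 0) {x : E} (hx : ‖x‖ < R) {y : ℝ} (hy : 0 < y) :
    ‖fderiv ℝ (fun x' => csExtension s u x' y) x‖ ≤
      L * volume.real (Metric.ball (0 : E) (2 * R)) * y ^ (-(Module.finrank ℝ E : ℝ)) := by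
  refine norm_fderiv_le_of_lip' ℝ (by positivity) ?_
  filter_upwards [(isOpen_lt continuous_norm continuous_const).mem_nhds hx] with x' hx'
  have hx' : ‖x'‖ < R := hx'
  have hint (x₁ : E) : Integrable fun z => y ^ (2 * s) * u (x₁ - z) *
      (‖z‖ ^ 2 + y ^ 2) ^ (-((Module.finrank ℝ E : ℝ) + 2 * s) / 2) := by
    refine Continuous.integrable_of_hasCompactSupport (Continuous.mul ?_ ?_) ?_
    · have := hu.continuous
      fun_prop
    · exact Continuous.rpow_const (by fun_prop) fun _ => Or.inl (by positivity)
    · exact ((hc.comp_homeomorph (Homeomorph.subLeft x₁)).mul_left).mul_right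
  rw [csExtension_eq_convolution s u x' y, csExtension_eq_convolution s u x y,
    ← integral_sub (hint x') (hint x)]
  have hsupp : ∀ z ∉ Metric.ball (0 : E) (2 * R), ∀ x₁ : E, ‖x₁‖ < R → u (x₁ - z) = 0 := by
    intro z hz x₁ hx₁
    apply huR
    rw [mem_ball_zero_iff, not_lt] at hz
    have := norm_sub_norm_le z x₁
    rw [norm_sub_rev] at this
    linarith
  rw [← setIntegral_eq_integral_of_forall_compl_eq_zero (s := Metric.ball (0 : E) (2 * R))
    (fun z hz => by rw [hsupp z hz x' hx', hsupp z hz x hx]; simp)]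
  refine (norm_setIntegral_le_of_norm_le_const
    (C := L * y ^ (-(Module.finrank ℝ E : ℝ)) * ‖x' - x‖) measure_ball_lt_top
    fun z _ => ?_).trans (le_of_eq (by ring))
  have h1 : (‖z‖ ^ 2 + y ^ 2) ^ (-((Module.finrank ℝ E : ℝ) + 2 * s) / 2) ≤
      y ^ (-((Module.finrank ℝ E : ℝ) + 2 * s)) := by
    have : y ^ (-((Module.finrank ℝ E : ℝ) + 2 * s)) =
        (y ^ 2) ^ (-((Module.finrank ℝ E : ℝ) + 2 * s) / 2) := by
      rw [← Real.rpow_natCast y 2, ← Real.rpow_mul hy.le]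
      congr 1
      push_cast
      ring
    rw [this]
    refine Real.rpow_le_rpow_of_nonpos (by positivity) (by nlinarith [sq_nonneg ‖z‖]) ?_
    have : 0 ≤ (Module.finrank ℝ E : ℝ) := by positivity
    linarith
  have h2 : y ^ (2 * s) * y ^ (-((Module.finrank ℝ E : ℝ) + 2 * s)) =
      y ^ (-(Module.finrank ℝ E : ℝ)) := by
    rw [← Real.rpow_add hy]
    congr 1
    ring
  have h3 : |u (x' - z) - u (x - z)| ≤ L * ‖x' - x‖ := by
    simpa [dist_eq_norm] using hu.dist_le_mul (x' - z) (x - z)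
  rw [← sub_mul, ← mul_sub, norm_mul, norm_mul, Real.norm_of_nonneg (by positivity),
    Real.norm_of_nonneg (by positivity : 0 ≤ (‖z‖ ^ 2 + y ^ 2) ^ (_ : ℝ)), Real.norm_eq_abs, ← h2]
  calc _ ≤ y ^ (2 * s) * (L * ‖x' - x‖) * y ^ (-((Module.finrank ℝ E : ℝ) + 2 * s)) := by gcongr
    _ = _ := by ring

theorem norm_deriv_csExtension_le {s a : ℝ} (ha0 : 0 ≤ a) (ha1 : a ≤ 1) (ha : a < 2 * s)
    {u : E → ℝ} {L : NNReal} (hu : LipschitzWith L u) (hc : HasCompactSupport u) {R : ℝ}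
    (huR : ∀ ξ, R ≤ ‖ξ‖ → u ξ = 0) {x : E} (hx : ‖x‖ < R) {y : ℝ} (hy : 0 < y) :
    ‖deriv (fun t => csExtension s u x t) y‖ ≤ (L * (4 * R) ^ (1 - a) * ∫ η : E,
      ‖η‖ ^ a * (1 + ‖η‖ ^ 2) ^ (-((Module.finrank ℝ E : ℝ) + 2 * s) / 2)) * y ^ (a - 1) := by
  have hs : 0 < s := by linarith
  have hR : 0 < R := (norm_nonneg x).trans_lt hx
  have hI : 0 ≤ ∫ η : E,
      ‖η‖ ^ a * (1 + ‖η‖ ^ 2) ^ (-((Module.finrank ℝ E : ℝ) + 2 * s) / 2) :=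
    integral_nonneg fun η => by positivity
  refine norm_deriv_le_of_lip' (by positivity) ?_
  filter_upwards [Ioi_mem_nhds (half_lt_self hy)] with t ht
  have ht : y / 2 < t := ht
  have ht0 : 0 < t := by linarith
  rw [csExtension_eq_rescaled s u x ht0, csExtension_eq_rescaled s u x hy,
    ← integral_sub (integrable_rescaled hs hu.continuous hc x t)
      (integrable_rescaled hs hu.continuous hc x y)]
  rw [mul_right_comm _ _ (y ^ (a - 1)), mul_right_comm _ _ ‖t - y‖, ← integral_const_mul]
  refine norm_integral_le_of_norm_le ((integrable_norm_rpow_mul_poisson ha0 ha).const_mul _)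
    (Eventually.of_forall fun η => ?_)
  rw [← sub_mul, norm_mul, Real.norm_of_nonneg (by positivity : 0 ≤ (1 + ‖η‖ ^ 2) ^ (_ : ℝ)),
    ← mul_assoc]
  gcongr
  by_cases hη : ‖η‖ ≤ 4 * R / y
  · have h1 : ‖u (x - t • η) - u (x - y • η)‖ ≤ L * (‖t - y‖ * ‖η‖) := by
      have := hu.dist_le_mul (x - t • η) (x - y • η)
      rwa [dist_eq_norm, dist_eq_norm, sub_sub_sub_cancel_left, ← sub_smul, norm_smul,
        norm_sub_rev y t] at this
    have h2 : ‖η‖ ≤ (4 * R) ^ (1 - a) * y ^ (a - 1) * ‖η‖ ^ a := by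
      rcases (norm_nonneg η).eq_or_lt with h0 | h0
      · rw [← h0]
        positivity
      · have h3 : ‖η‖ ^ (1 - a) ≤ (4 * R / y) ^ (1 - a) :=
          Real.rpow_le_rpow h0.le hη (by linarith)
        rw [Real.div_rpow (by positivity) hy.le, div_eq_mul_inv, ← Real.rpow_neg hy.le,
          neg_sub] at h3
        calc ‖η‖ = ‖η‖ ^ (1 - a) * ‖η‖ ^ a := by
              rw [← Real.rpow_add h0, sub_add_cancel, Real.rpow_one]
          _ ≤ _ := by gcongr
    calc _ ≤ L * (‖t - y‖ * ‖η‖) := h1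
      _ ≤ L * (‖t - y‖ * ((4 * R) ^ (1 - a) * y ^ (a - 1) * ‖η‖ ^ a)) := by gcongr
      _ = _ := by ring
  · have hzero : ∀ r, y / 2 < r → u (x - r • η) = 0 := by
      intro r hr
      apply huR
      rw [not_le, div_lt_iff₀ hy] at hη
      have h1 := norm_sub_norm_le (r • η) x
      rw [norm_sub_rev, norm_smul, Real.norm_of_nonneg (by linarith)] at h1
      have h2 : y / 2 * ‖η‖ ≤ r * ‖η‖ := by gcongr
      linarith
    rw [hzero t ht, hzero y (by linarith), sub_zero, norm_zero]
    positivity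

theorem lintegral_energy_lt_top [Nontrivial E] {s : ℝ} (hs0 : 0 < s) (hs1 : s < 1) {u : E → ℝ}
    {L : NNReal} (hu : LipschitzWith L u) (hc : HasCompactSupport u) {Ω : Set E}
    (hΩ : MeasurableSet Ω) {R : ℝ} (huR : ∀ ξ, R ≤ ‖ξ‖ → u ξ = 0) (hΩR : ∀ x ∈ Ω, ‖x‖ < R) :
    ∫⁻ y in Set.Ioi (0 : ℝ), ∫⁻ x in Ω, ENNReal.ofReal (y ^ (1 - 2 * s) *
      (‖fderiv ℝ (fun x' => csExtension s u x' y) x‖ ^ 2 +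
        (deriv (fun t => csExtension s u x t) y) ^ 2)) < ∞ := by
  have hvol : volume Ω < ∞ :=
    (measure_mono fun x hx => mem_ball_zero_iff.2 (hΩR x hx)).trans_lt
      (measure_ball_lt_top (x := (0 : E)) (r := R))
  have hfin : ∀ (T : Set ℝ) (C γ : ℝ), MeasurableSet T → IntegrableOn (fun y : ℝ => y ^ γ) T →
      (∀ y ∈ T, ∀ x ∈ Ω, y ^ (1 - 2 * s) *
        (‖fderiv ℝ (fun x' => csExtension s u x' y) x‖ ^ 2 +
          (deriv (fun t => csExtension s u x t) y) ^ 2) ≤ C * y ^ γ) →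
      ∫⁻ y in T, ∫⁻ x in Ω, ENNReal.ofReal (y ^ (1 - 2 * s) *
        (‖fderiv ℝ (fun x' => csExtension s u x' y) x‖ ^ 2 +
          (deriv (fun t => csExtension s u x t) y) ^ 2)) < ∞ := by
    intro T C γ hT hint hle
    calc _ ≤ ∫⁻ y in T, ENNReal.ofReal (C * y ^ γ) * volume Ω := by
          refine setLIntegral_mono' hT fun y hy => ?_
          rw [← setLIntegral_const]
          exact setLIntegral_mono' hΩ fun x hx => ENNReal.ofReal_le_ofReal (hle y hy x hx)
      _ = (∫⁻ y in T, ENNReal.ofReal (C * y ^ γ)) * volume Ω :=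
          lintegral_mul_const' _ _ hvol.ne
      _ < ∞ := ENNReal.mul_lt_top (hint.const_mul C).lintegral_lt_top hvol
  rw [← Set.Ioc_union_Ioi_eq_Ioi zero_le_one]
  refine (lintegral_union_le _ _ _).trans_lt (ENNReal.add_lt_top.2 ⟨?_, ?_⟩)
  · have ha1 : 2 * s - s ^ 2 ≤ 1 := by nlinarith [sq_nonneg (1 - s)]
    have ha0 : 0 ≤ 2 * s - s ^ 2 := by nlinarith
    have ha : 2 * s - s ^ 2 < 2 * s := by nlinarith
    set a := 2 * s - s ^ 2 with ha_def
    set A : ℝ := L * ∫ η : E, (1 + ‖η‖ ^ 2) ^ (-((Module.finrank ℝ E : ℝ) + 2 * s) / 2)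
    set D := L * (4 * R) ^ (1 - a) * ∫ η : E,
      ‖η‖ ^ a * (1 + ‖η‖ ^ 2) ^ (-((Module.finrank ℝ E : ℝ) + 2 * s) / 2)
    refine hfin (Set.Ioc 0 1) (A ^ 2 + D ^ 2) (1 - 2 * s + 2 * (a - 1)) measurableSet_Ioc ?_ ?_
    · exact (intervalIntegrable_iff_integrableOn_Ioc_of_le zero_le_one).1
        (intervalIntegral.intervalIntegrable_rpow' (by nlinarith))
    · rintro y ⟨hy, hy1⟩ x hx
      have h1 := norm_fderiv_csExtension_le hs0 hu hc x hy
      have h2 := norm_deriv_csExtension_le ha0 ha1 ha hu hc huR (hΩR x hx) hy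
      have h3 : 1 ≤ y ^ (a - 1) := Real.one_le_rpow_of_pos_of_le_one_of_nonpos hy hy1 (by linarith)
      have h4 : y ^ (2 * (a - 1)) = (y ^ (a - 1)) ^ 2 := by
        rw [mul_comm, Real.rpow_mul hy.le, Real.rpow_ofNat]
      rw [Real.rpow_add hy, h4, mul_left_comm, ← sq_abs (deriv _ y), ← Real.norm_eq_abs]
      gcongr
      have h5 := pow_le_pow_left₀ (norm_nonneg _) h1 2
      have h6 := pow_le_pow_left₀ (norm_nonneg _) h2 2
      have h7 : 1 ≤ (y ^ (a - 1)) ^ 2 := one_le_pow₀ h3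
      nlinarith [mul_le_mul_of_nonneg_left h7 (sq_nonneg A)]
  · set A := L * volume.real (Metric.ball (0 : E) (2 * R))
    set D := L * (4 * R) ^ (1 - (0 : ℝ)) * ∫ η : E,
      ‖η‖ ^ (0 : ℝ) * (1 + ‖η‖ ^ 2) ^ (-((Module.finrank ℝ E : ℝ) + 2 * s) / 2)
    refine hfin (Set.Ioi 1) (A ^ 2 + D ^ 2) (1 - 2 * s + 2 * (-1)) measurableSet_Ioi
      (integrableOn_Ioi_rpow_of_lt (by linarith) one_pos) fun y hy x hx => ?_
    have hy1 : 1 < y := hy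
    have hy : 0 < y := by linarith
    have h1 := norm_fderiv_csExtension_le_of_mem_ball hs0 hu hc huR (hΩR x hx) hy
    have h2 := norm_deriv_csExtension_le (s := s) le_rfl zero_le_one (by linarith) hu hc huR
      (hΩR x hx) hy
    have h3 : y ^ (-(Module.finrank ℝ E : ℝ)) ≤ y ^ (-1 : ℝ) := by
      refine Real.rpow_le_rpow_of_exponent_le hy1.le (neg_le_neg ?_)
      exact_mod_cast (Module.finrank_pos : 0 < Module.finrank ℝ E)
    have h4 : y ^ ((2 : ℝ) * (-1)) = (y ^ (-1 : ℝ)) ^ 2 := by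
      rw [mul_comm, Real.rpow_mul hy.le, Real.rpow_ofNat]
    rw [zero_sub] at h2
    rw [Real.rpow_add hy, h4, mul_left_comm, ← sq_abs (deriv _ y), ← Real.norm_eq_abs]
    gcongr
    have h5 := pow_le_pow_left₀ (norm_nonneg _)
      (h1.trans (mul_le_mul_of_nonneg_left h3 (by positivity : 0 ≤ A))) 2
    have h6 := pow_le_pow_left₀ (norm_nonneg _) h2 2
    rw [add_mul, ← mul_pow, ← mul_pow]
    exact add_le_add h5 h6

end Energy

section Positivity

variable {E : Type*} [NormedAddCommGroup E] [InnerProductSpace ℝ E] [FiniteDimensional ℝ E]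
  [MeasurableSpace E] [BorelSpace E]

theorem hasDerivAt_csExtension {s : ℝ} (hs : 0 < s) {u : E → ℝ} (hu : Continuous u)
    (hc : HasCompactSupport u) (x : E) {y : ℝ} (hy : 0 < y) :
    HasDerivAt (csExtension s u x)
      (2 * s * y ^ (2 * s - 1) *
          shiftedRiesz u (((Module.finrank ℝ E : ℝ) + 2 * s) / 2) x (y ^ 2) +
        y ^ (2 * s) * (-(((Module.finrank ℝ E : ℝ) + 2 * s) / 2) *
          shiftedRiesz u (((Module.finrank ℝ E : ℝ) + 2 * s) / 2 + 1) x (y ^ 2) * (2 * y))) y := by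
  have hy2 : 0 < y ^ 2 := by positivity
  have h1 := HasDerivAt.comp (h := fun y : ℝ => y ^ 2) y (hasDerivAt_shiftedRiesz hu hc
    (by positivity : 0 < ((Module.finrank ℝ E : ℝ) + 2 * s) / 2) x hy2) (hasDerivAt_pow 2 y)
  have h2 := (Real.hasDerivAt_rpow_const (p := 2 * s) (Or.inl hy.ne')).mul h1
  have h3 : csExtension s u x = fun y => y ^ (2 * s) *
      shiftedRiesz u (((Module.finrank ℝ E : ℝ) + 2 * s) / 2) x (y ^ 2) :=
    funext fun y => csExtension_eq_shiftedRiesz s u x y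
  rw [h3]
  refine h2.congr_deriv ?_
  simp

theorem continuousOn_deriv_csExtension {s : ℝ} (hs : 0 < s) {u : E → ℝ} (hu : Continuous u)
    (hc : HasCompactSupport u) :
    ContinuousOn (fun p : E × ℝ => deriv (csExtension s u p.1) p.2)
      (Set.univ ×ˢ Set.Ioi 0) := by
  have hG (β : ℝ) : ContinuousOn (fun p : E × ℝ => shiftedRiesz u β p.1 (p.2 ^ 2))
      (Set.univ ×ˢ Set.Ioi 0) :=
    (continuousOn_shiftedRiesz hu hc β).comp (f := fun p : E × ℝ => (p.1, p.2 ^ 2))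
      (by fun_prop) fun p hp => ⟨trivial, pow_pos (Set.mem_Ioi.1 hp.2) 2⟩
  have hpow (γ : ℝ) : ContinuousOn (fun p : E × ℝ => p.2 ^ γ) (Set.univ ×ˢ Set.Ioi 0) :=
    continuousOn_snd.rpow_const fun p hp => Or.inl (ne_of_gt hp.2)
  refine ContinuousOn.congr ?_ fun p hp => (hasDerivAt_csExtension hs hu hc p.1 hp.2).deriv
  exact ((continuousOn_const.mul (hpow _)).mul (hG _)).add
    ((hpow _).mul ((continuousOn_const.mul (hG _)).mul (by fun_prop)))

theorem tendsto_csExtension_atTop [Nontrivial E] {s : ℝ} (hs : 0 < s) {u : E → ℝ}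
    (hu : Continuous u) (hc : HasCompactSupport u) (x : E) :
    Tendsto (csExtension s u x) atTop (nhds 0) := by
  have hd : 0 < (Module.finrank ℝ E : ℝ) := by
    exact_mod_cast (Module.finrank_pos : 0 < Module.finrank ℝ E)
  have hlim := (tendsto_rpow_neg_atTop hd).mul_const (∫ ξ, |u ξ|)
  rw [zero_mul] at hlim
  refine squeeze_zero_norm' ?_ hlim
  filter_upwards [Ioi_mem_atTop 0] with y hy
  have hy : 0 < y := hy
  rw [csExtension, ← integral_const_mul]
  refine norm_integral_le_of_norm_le
    ((hu.integrable_of_hasCompactSupport hc).abs.const_mul _) (Eventually.of_forall fun ξ => ?_)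
  have h1 : (‖x - ξ‖ ^ 2 + y ^ 2) ^ (-((Module.finrank ℝ E : ℝ) + 2 * s) / 2) ≤
      (y ^ 2) ^ (-((Module.finrank ℝ E : ℝ) + 2 * s) / 2) :=
    Real.rpow_le_rpow_of_nonpos (by positivity) (by nlinarith [sq_nonneg ‖x - ξ‖])
      (by linarith)
  have h2 : y ^ (-(Module.finrank ℝ E : ℝ)) =
      y ^ (2 * s) * (y ^ 2) ^ (-((Module.finrank ℝ E : ℝ) + 2 * s) / 2) := by
    rw [← Real.rpow_natCast y 2, ← Real.rpow_mul hy.le, ← Real.rpow_add hy]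
    congr 1
    push_cast
    ring
  rw [norm_mul, norm_mul, Real.norm_of_nonneg (by positivity),
    Real.norm_of_nonneg (by positivity : 0 ≤ (‖x - ξ‖ ^ 2 + y ^ 2) ^ (_ : ℝ)), Real.norm_eq_abs, h2,
    mul_right_comm]
  gcongr

theorem exists_deriv_csExtension_ne_zero [Nontrivial E] {s : ℝ} (hs : 0 < s) {u : E → ℝ}
    (hu : Continuous u) (hc : HasCompactSupport u) (hne : u ≠ 0) (R : ℝ) :
    ∃ x : E, R < ‖x‖ ∧ ∃ y > 0, deriv (csExtension s u x) y ≠ 0 := by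
  by_contra! hcon
  refine hne (eq_zero_of_shiftedRiesz_eq_zero_far hu hc
    (β := ((Module.finrank ℝ E : ℝ) + 2 * s) / 2) (by positivity) (R := R) fun x hx t ht => ?_)
  have hconst : ∀ y > 0, csExtension s u x y = csExtension s u x (√t) := fun y hy =>
    isOpen_Ioi.is_const_of_deriv_eq_zero isPreconnected_Ioi
      (fun z hz => (hasDerivAt_csExtension hs hu hc x hz).differentiableAt.differentiableWithinAt)
      (fun z hz => hcon x hx z hz) hy (Real.sqrt_pos.2 ht)
  have h0 : csExtension s u x (√t) = 0 := by
    refine tendsto_nhds_unique (tendsto_const_nhds.congr' ?_) (tendsto_csExtension_atTop hs hu hc x)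
    filter_upwards [Ioi_mem_atTop 0] with y hy using (hconst y hy).symm
  rw [csExtension_eq_shiftedRiesz, Real.sq_sqrt ht.le] at h0
  exact (mul_eq_zero.1 h0).resolve_left (Real.rpow_pos_of_pos (Real.sqrt_pos.2 ht) _).ne'

theorem lintegral_energy_compl_pos [Nontrivial E] {s : ℝ} (hs : 0 < s) {u : E → ℝ}
    (hu : Continuous u) (hc : HasCompactSupport u) (hne : u ≠ 0) {Ω : Set E} {R : ℝ}
    (hΩR : ∀ x ∈ Ω, ‖x‖ < R) :
    0 < ∫⁻ y in Set.Ioi (0 : ℝ), ∫⁻ x in Ωᶜ, ENNReal.ofReal (y ^ (1 - 2 * s) *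
      (‖fderiv ℝ (fun x' => csExtension s u x' y) x‖ ^ 2 +
        (deriv (fun t => csExtension s u x t) y) ^ 2)) := by
  obtain ⟨x₀, hx₀, y₀, hy₀, hd⟩ := exists_deriv_csExtension_ne_zero hs hu hc hne R
  have hcont : ContinuousAt (fun p : E × ℝ =>
      p.2 ^ (1 - 2 * s) * (deriv (csExtension s u p.1) p.2) ^ 2) (x₀, y₀) := by
    refine ContinuousAt.mul (continuousAt_snd.rpow_const (Or.inl hy₀.ne'))
      (ContinuousAt.pow ?_ 2)
    exact (continuousOn_deriv_csExtension hs hu hc).continuousAt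
      ((isOpen_univ.prod isOpen_Ioi).mem_nhds ⟨trivial, hy₀⟩)
  have hpos : 0 < y₀ ^ (1 - 2 * s) * (deriv (csExtension s u x₀) y₀) ^ 2 := by positivity
  obtain ⟨c, hc0, hc1⟩ := exists_between hpos
  obtain ⟨U, V, hU, hxU, hV, hyV, hUV⟩ :=
    mem_nhds_prod_iff'.1 (hcont.eventually (lt_mem_nhds hc1))
  set U' := U ∩ {x | R < ‖x‖}
  set V' := V ∩ Set.Ioi 0
  have hU' : IsOpen U' := hU.inter (isOpen_lt continuous_const continuous_norm)
  have hV' : IsOpen V' := hV.inter isOpen_Ioi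
  have hUΩ : U' ⊆ Ωᶜ := fun x hx hxΩ => (hΩR x hxΩ).not_gt hx.2
  calc 0 < ENNReal.ofReal c * volume U' * volume V' := by
        refine ENNReal.mul_pos (ENNReal.mul_pos ?_ ?_).ne' ?_
        · exact (ENNReal.ofReal_pos.2 hc0).ne'
        · exact (hU'.measure_pos volume ⟨x₀, hxU, hx₀⟩).ne'
        · exact (hV'.measure_pos volume ⟨y₀, hyV, hy₀⟩).ne'
    _ = ∫⁻ y in V', ∫⁻ x in U', ENNReal.ofReal c := by
        rw [setLIntegral_const, setLIntegral_const]
    _ ≤ ∫⁻ y in V', ∫⁻ x in Ωᶜ, ENNReal.ofReal (y ^ (1 - 2 * s) *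
          (‖fderiv ℝ (fun x' => csExtension s u x' y) x‖ ^ 2 +
            (deriv (fun t => csExtension s u x t) y) ^ 2)) := by
        refine setLIntegral_mono' hV'.measurableSet fun y hy => ?_
        refine le_trans ?_ (lintegral_mono_set hUΩ)
        refine setLIntegral_mono' hU'.measurableSet fun x hx => ENNReal.ofReal_le_ofReal ?_
        have h1 : c < y ^ (1 - 2 * s) * (deriv (csExtension s u x) y) ^ 2 :=
          hUV (Set.mk_mem_prod hx.1 hy.1)
        have hy0 : 0 < y := hy.2
        refine h1.le.trans ?_
        gcongr
        exact le_add_of_nonneg_left (by positivity)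
    _ ≤ _ := lintegral_mono_set Set.inter_subset_right

end Positivity

/-- For a bounded open `Ω` and a smooth compactly supported `u ≢ 0` with support in `Ω`,
the weighted energy of the Caffarelli–Silvestre extension `w_u` over
`(ℝⁿ∖Ω) × (0,∞)` is strictly positive; consequently its energy over the half-cylinder
`Ω × (0,∞)` is strictly smaller than its energy over the whole half-space. Here
`|∇w|² = ‖∇ₓw‖² + (∂_y w)²` is the square of the full gradient in `(x,y)`. -/
theorem stmt16 {n : ℕ} (hn : 1 ≤ n) (s : ℝ) (hs : s ∈ Set.Ioo (0 : ℝ) 1)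
    (Ω : Set (EuclideanSpace ℝ (Fin n))) (hΩopen : IsOpen Ω)
    (hΩbdd : Bornology.IsBounded Ω)
    (u : EuclideanSpace ℝ (Fin n) → ℝ) (hsmooth : ContDiff ℝ (⊤ : ℕ∞) u)
    (hsupp : HasCompactSupport u) (hsuppΩ : tsupport u ⊆ Ω) (hne : u ≠ 0)
    (w : EuclideanSpace ℝ (Fin n) → ℝ → ℝ)
    (hw : ∀ (x : EuclideanSpace ℝ (Fin n)) (y : ℝ),
      w x y = ∫ ξ : EuclideanSpace ℝ (Fin n),
        y ^ (2 * s) * u ξ * (‖x - ξ‖ ^ 2 + y ^ 2) ^ (-((n : ℝ) + 2 * s) / 2)) :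
    (0 < ∫⁻ y in Set.Ioi (0 : ℝ), ∫⁻ x in (Ωᶜ : Set (EuclideanSpace ℝ (Fin n))),
        ENNReal.ofReal (y ^ (1 - 2 * s) *
          (‖fderiv ℝ (fun x' => w x' y) x‖ ^ 2 + (deriv (fun t => w x t) y) ^ 2))) ∧
    (∫⁻ y in Set.Ioi (0 : ℝ), ∫⁻ x in Ω,
        ENNReal.ofReal (y ^ (1 - 2 * s) *
          (‖fderiv ℝ (fun x' => w x' y) x‖ ^ 2 + (deriv (fun t => w x t) y) ^ 2)))
      <
    ∫⁻ y in Set.Ioi (0 : ℝ), ∫⁻ x : EuclideanSpace ℝ (Fin n),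
        ENNReal.ofReal (y ^ (1 - 2 * s) *
          (‖fderiv ℝ (fun x' => w x' y) x‖ ^ 2 + (deriv (fun t => w x t) y) ^ 2)) := by
  obtain rfl : w = csExtension s u := by
    funext x y
    rw [hw, csExtension, finrank_euclideanSpace_fin]
  have : Nonempty (Fin n) := ⟨⟨0, hn⟩⟩
  obtain ⟨L, hL⟩ := hsmooth.lipschitzWith_of_hasCompactSupport hsupp (by simp)
  obtain ⟨R, hR⟩ := hΩbdd.subset_ball 0
  have hΩR : ∀ x ∈ Ω, ‖x‖ < R := fun x hx => mem_ball_zero_iff.1 (hR hx)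
  have huR : ∀ ξ, R ≤ ‖ξ‖ → u ξ = 0 := fun ξ hξ =>
    image_eq_zero_of_notMem_tsupport fun h => (hΩR ξ (hsuppΩ h)).not_ge hξ
  have hpos := lintegral_energy_compl_pos hs.1 hsmooth.continuous hsupp hne hΩR
  refine ⟨hpos, ?_⟩
  have hfin := lintegral_energy_lt_top hs.1 hs.2 hL hsupp hΩopen.measurableSet huR hΩR
  refine (ENNReal.lt_add_right hfin.ne hpos.ne').trans_le ((le_lintegral_add _ _).trans ?_)
  exact lintegral_mono fun y => (lintegral_add_compl _ hΩopen.measurableSet).le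
end
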